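/- Under condition (LD1), sup_{z∈ℝ} |F(z) − Φ(z)| ≤ r₁ + 4r₂ + 8r₃ + r₄ + 4.5r₅ + 1.5r₆, where r₁ = E|Σ_{i∈𝒥}(X_iY_i − EX_iY_i)|, r₂ = Σ_{i∈𝒥} E|X_iY_i|·1{|Y_i|>1}, r₃ = Σ_{i∈𝒥} E|X_i|(Y_i² ∧ 1), r₄ = Σ_{i∈𝒥} E{|W X_i|(Y_i² ∧ 1)}, r₅ = ∫_{|t|≤1} Var(K̂(t)) dt, and r₆ = (∫_{|t|≤1} |t| Var(K̂(t)) dt)^{1/2}. -/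

import Mathlib

open MeasureTheory ProbabilityTheory Real

noncomputable def stdGaussianCDF : ℝ → ℝ :=
  fun z => ∫ x in Set.Iic z, (Real.sqrt (2 * Real.pi))⁻¹ * Real.exp (-x ^ 2 / 2)


namespace LDBE

/-- the kernel -/
noncomputable def kk (y t : ℝ) : ℝ :=
  (if -y ≤ t ∧ t < 0 then (1 : ℝ) else 0) - (if 0 ≤ t ∧ t ≤ -y then (1 : ℝ) else 0)

lemma measurable_kk : Measurable (fun p : ℝ × ℝ => kk p.1 p.2) := by
  unfold kk
  refine Measurable.sub (Measurable.ite ?_ measurable_const measurable_const)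
    (Measurable.ite ?_ measurable_const measurable_const)
  · exact (measurableSet_le measurable_fst.neg measurable_snd).inter
      (measurableSet_lt measurable_snd measurable_const)
  · exact (measurableSet_le measurable_const measurable_snd).inter
      (measurableSet_le measurable_snd measurable_fst.neg)

lemma abs_kk_le (y t : ℝ) : |kk y t| ≤ 1 := by
  unfold kk
  split_ifs <;> norm_num

noncomputable def nu : Measure ℝ := volume.restrict (Set.Icc (-1 : ℝ) 1)

instance : IsFiniteMeasure nu := by unfold nu; infer_instance

noncomputable def clamp (y : ℝ) : ℝ := max (-1) (min 1 y)

lemma integral_kk (y : ℝ) (g : ℝ → ℝ) :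
    ∫ t, g t * kk y t ∂nu = ∫ t in (-clamp y)..0, g t := by
  unfold nu
  rcases le_total 0 y with hy | hy
  · have h1 : ∀ t, g t * kk y t =
        Set.indicator (Set.Ico (-y) 0) g t - Set.indicator (Set.Icc 0 (-y)) g t := by
      intro t
      simp only [kk, Set.indicator, Set.mem_Ico, Set.mem_Icc]
      split_ifs <;> ring
    have hc : clamp y = min 1 y := by
      unfold clamp; apply max_eq_right; apply le_min <;> linarith
    have h2 : ∀ᵐ t ∂(volume.restrict (Set.Icc (-1 : ℝ) 1)), g t * kk y t =
        Set.indicator (Set.Ioc (-y) 0) g t := by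
      apply ae_restrict_of_ae
      have e1 : ∀ᵐ t : ℝ, t ≠ 0 := by simp [ae_iff]
      have e2 : ∀ᵐ t : ℝ, t ≠ -y := by simp [ae_iff]
      filter_upwards [e1, e2] with t h0 hy0
      rw [h1]
      simp only [Set.indicator, Set.mem_Ico, Set.mem_Icc, Set.mem_Ioc]
      grind
    rw [integral_congr_ae h2, integral_indicator measurableSet_Ioc,
      Measure.restrict_restrict measurableSet_Ioc]
    rw [intervalIntegral.integral_of_le (by rw [hc]; simp [hy])]
    apply setIntegral_congr_set
    have : (Set.Ioc (-y) 0 ∩ Set.Icc (-1) 1 : Set ℝ) =ᵐ[volume] (Set.Ioc (-y) 0 ∩ Set.Ioc (-1) 1 : Set ℝ) :=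
      (Filter.EventuallyEq.refl _ _).inter Ioc_ae_eq_Icc.symm
    refine this.trans (Filter.EventuallyEq.of_eq ?_)
    rw [Set.Ioc_inter_Ioc, hc]
    congr 1
    · rw [sup_comm, ← max_neg_neg]
    · norm_num
  · have hc : clamp y = max (-1) y := by
      unfold clamp; rw [min_eq_right]; linarith
    have h2 : ∀ᵐ t ∂(volume.restrict (Set.Icc (-1 : ℝ) 1)), g t * kk y t =
        - Set.indicator (Set.Ioc 0 (-y)) g t := by
      apply ae_restrict_of_ae
      have e1 : ∀ᵐ t : ℝ, t ≠ 0 := by simp [ae_iff]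
      filter_upwards [e1] with t h0
      simp only [Set.indicator, Set.mem_Ioc, kk]
      grind
    rw [integral_congr_ae h2, integral_neg, integral_indicator measurableSet_Ioc,
      Measure.restrict_restrict measurableSet_Ioc, intervalIntegral.integral_symm]
    rw [intervalIntegral.integral_of_le (by rw [hc]; simp [hy])]
    congr 1
    apply setIntegral_congr_set
    have : (Set.Ioc 0 (-y) ∩ Set.Icc (-1) 1 : Set ℝ) =ᵐ[volume] (Set.Ioc 0 (-y) ∩ Set.Ioc (-1) 1 : Set ℝ) :=
      (Filter.EventuallyEq.refl _ _).inter Ioc_ae_eq_Icc.symm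
    refine this.trans (Filter.EventuallyEq.of_eq ?_)
    rw [Set.Ioc_inter_Ioc, hc]
    congr 1
    · norm_num
    · rw [← min_neg_neg, min_comm]; norm_num

lemma kk_tail (y : ℝ) {g : ℝ → ℝ} (hg : Continuous g) {M : ℝ} (hM : ∀ t, |g t| ≤ M) :
    |(∫ t in (-y)..0, g t) - ∫ t, g t * kk y t ∂nu| ≤ M * (if 1 < |y| then |y| else 0) := by
  rw [integral_kk]
  have h := intervalIntegral.integral_add_adjacent_intervals
    (hg.intervalIntegrable (μ := volume) (-y) (-clamp y)) (hg.intervalIntegrable (-clamp y) 0)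
  rw [← h, add_sub_cancel_right]
  refine (intervalIntegral.norm_integral_le_of_norm_le_const (f := g) (C := M)
    (fun x _ => hM x)).trans ?_
  have hM0 : 0 ≤ M := (abs_nonneg _).trans (hM 0)
  apply mul_le_mul_of_nonneg_left _ hM0
  unfold clamp
  split_ifs with hy
  · rcases le_total 0 y with h0 | h0
    · rw [abs_of_nonneg h0] at *
      rw [min_eq_left hy.le, max_eq_right (by norm_num), abs_le]
      constructor <;> linarith
    · rw [abs_of_nonpos h0] at *
      rw [min_eq_right (by linarith), max_eq_left (by linarith), abs_le]
      constructor <;> linarith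
  · rw [not_lt, abs_le] at hy
    rw [min_eq_right hy.2, max_eq_right hy.1]; simp

lemma kk_t (y : ℝ) : ∫ t, |t| * |kk y t| ∂nu ≤ min (y ^ 2) 1 := by
  have hc : |clamp y| * |clamp y| = min (y ^ 2) 1 := by
    rw [← sq, sq_abs]
    unfold clamp
    rcases le_total y (-1) with h | h
    · rw [min_eq_right (by linarith), max_eq_left h, min_eq_right (by nlinarith)]; norm_num
    · rcases le_total 1 y with h' | h'
      · rw [min_eq_left h', max_eq_right (by linarith), min_eq_right (by nlinarith)]; norm_num
      · rw [min_eq_right h', max_eq_right h, min_eq_left (by nlinarith)]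
  have key : |(∫ t in (-clamp y)..0, (|t|))| ≤ min (y ^ 2) 1 := by
    refine (intervalIntegral.norm_integral_le_of_norm_le_const (f := fun t : ℝ => |t|) (C := |clamp y|) ?_).trans ?_
    · intro x hx
      rw [Set.mem_uIoc] at hx
      rw [Real.norm_eq_abs, abs_abs]
      rcases hx with hx | hx
      · rw [← sq_le_sq]; nlinarith
      · rw [← sq_le_sq]; nlinarith
    · rw [zero_sub, neg_neg, hc]
  rw [← integral_kk] at key
  rcases le_total 0 y with hy | hy
  · refine le_trans (le_of_eq ?_) ((le_abs_self _).trans key)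
    congr 1; ext t
    rcases eq_or_ne t 0 with rfl | ht
    · simp
    congr 1
    apply abs_of_nonneg
    clear key hc
    unfold kk; grind
  · refine le_trans (le_of_eq ?_) ((neg_le_abs _).trans key)
    rw [← integral_neg]
    congr 1; ext t; rw [← mul_neg]; congr 1
    apply abs_of_nonpos
    clear key hc
    unfold kk; grind

/-! Stein solution -/

noncomputable def ga (x : ℝ) : ℝ := rexp (-x ^ 2 / 2)

lemma ga_pos (x : ℝ) : 0 < ga x := Real.exp_pos _
lemma ga_cont : Continuous ga := by unfold ga; fun_prop
lemma ga_int : Integrable ga := by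
  have := integrable_exp_neg_mul_sq (b := 1/2) (by norm_num)
  refine this.congr (Filter.Eventually.of_forall fun x => ?_)
  simp only [ga]; congr 1; ring
lemma ga_total : ∫ x, ga x = Real.sqrt (2 * π) := by
  have := integral_gaussian (1/2)
  rw [show π / (1/2) = 2 * π by ring] at this
  rw [← this]; congr 1; ext x; simp only [ga]; congr 1; ring

lemma ga_deriv (x : ℝ) : HasDerivAt ga (-x * ga x) x := by
  have : HasDerivAt (fun x : ℝ => -x ^ 2 / 2) (-x) x := by
    have := ((hasDerivAt_pow 2 x).neg).div_const 2
    refine this.congr_deriv ?_; simp; ring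
  have := this.exp
  rw [mul_comm]; exact this

lemma ga_tendsto : Filter.Tendsto ga Filter.atTop (nhds 0) := by
  unfold ga
  refine Real.tendsto_exp_atBot.comp ?_
  have : Filter.Tendsto (fun x : ℝ => x ^ 2 / 2) Filter.atTop Filter.atTop :=
    (Filter.tendsto_pow_atTop (by norm_num)).atTop_div_const (by norm_num)
  refine (Filter.tendsto_neg_atTop_atBot.comp this).congr fun x => ?_
  simp [neg_div]

lemma mills (w : ℝ) (hw : 0 ≤ w) : w * ∫ x in Set.Ioi w, ga x ≤ ga w := by
  have hd : ∀ x ∈ Set.Ici w, HasDerivAt (fun x => - ga x) (x * ga x) x := by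
    intro x _
    have := (ga_deriv x).neg
    exact this.congr_deriv (by ring)
  have hlim : Filter.Tendsto (fun x => - ga x) Filter.atTop (nhds 0) := by
    simpa using ga_tendsto.neg
  have hpos : ∀ x ∈ Set.Ioi w, 0 ≤ x * ga x := fun x hx =>
    mul_nonneg (hw.trans (le_of_lt hx)) (ga_pos x).le
  have hdint := integrableOn_Ioi_deriv_of_nonneg' hd hpos hlim
  have he := integral_Ioi_of_hasDerivAt_of_nonneg' hd hpos hlim
  rw [← integral_const_mul]
  calc _ ≤ ∫ x in Set.Ioi w, x * ga x := by
        apply setIntegral_mono_on (ga_int.integrableOn.const_mul w) hdint measurableSet_Ioi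
        intro x hx
        exact mul_le_mul_of_nonneg_right (le_of_lt hx) (ga_pos x).le
    _ = _ := by rw [he]; ring

lemma mills' (w : ℝ) (hw : w ≤ 0) : -w * ∫ x in Set.Iic w, ga x ≤ ga w := by
  have := mills (-w) (by linarith)
  rw [show ga (-w) = ga w by simp [ga]] at this
  refine le_trans (le_of_eq ?_) this
  congr 1
  rw [← integral_comp_neg_Iic w ga]
  congr 1; ext x; simp [ga]

lemma stein_exists {h : ℝ → ℝ} (hc : Continuous h) (h0 : ∀ x, 0 ≤ h x) (h1 : ∀ x, h x ≤ 1) :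
    ∃ f : ℝ → ℝ, ∃ N : ℝ, N = (∫ x, h x * ga x) / Real.sqrt (2 * π) ∧ 0 ≤ N ∧ N ≤ 1 ∧
      (∀ w, HasDerivAt f (w * f w + (h w - N)) w) ∧
      (∀ w, |w * f w + (h w - N)| ≤ 1) := by
  have hgi : Integrable (fun x => h x * ga x) := by
    refine ga_int.mono' (hc.mul ga_cont).aestronglyMeasurable (Filter.Eventually.of_forall fun x => ?_)
    rw [Real.norm_eq_abs, abs_of_nonneg (mul_nonneg (h0 x) (ga_pos x).le)]
    exact mul_le_of_le_one_left (ga_pos x).le (h1 x)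
  set C := Real.sqrt (2 * π) with hC
  have hCpos : 0 < C := Real.sqrt_pos.mpr (by positivity)
  set N := (∫ x, h x * ga x) / C with hN
  have hg : Integrable (fun x => (h x - N) * ga x) := by
    simp only [sub_mul]; exact hgi.sub (ga_int.const_mul N)
  have hgc : Continuous (fun x => (h x - N) * ga x) := by
    have := ga_cont
    fun_prop
  have hN0 : 0 ≤ N := div_nonneg (integral_nonneg fun x => mul_nonneg (h0 x) (ga_pos x).le) hCpos.le
  have hN1 : N ≤ 1 := by
    rw [hN, div_le_one hCpos, hC, ← ga_total]
    exact integral_mono hgi ga_int fun x => mul_le_of_le_one_left (ga_pos x).le (h1 x)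
  refine ⟨fun w => (ga w)⁻¹ * ∫ x in Set.Iic w, (h x - N) * ga x, N, rfl, hN0, hN1, ?_, ?_⟩
  · intro w
    have hI : HasDerivAt (fun w => ∫ x in Set.Iic w, (h x - N) * ga x) ((h w - N) * ga w) w := by
      have e : (fun w => ∫ x in Set.Iic w, (h x - N) * ga x) = fun w =>
          (∫ x in Set.Iic 0, (h x - N) * ga x) + ∫ x in (0:ℝ)..w, (h x - N) * ga x := by
        ext w
        rw [← intervalIntegral.integral_Iic_sub_Iic hg.integrableOn hg.integrableOn]; ring
      rw [e]
      exact (intervalIntegral.integral_hasDerivAt_right (hgc.intervalIntegrable _ _)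
        (hgc.stronglyMeasurableAtFilter _ _) hgc.continuousAt).const_add _
    have := ((ga_deriv w).inv (ga_pos w).ne').mul hI
    refine this.congr_deriv ?_
    have := (ga_pos w).ne'
    simp only [Pi.inv_apply]
    field_simp
  · intro w
    set a := ∫ x in Set.Ioi w, h x * ga x
    set b := ∫ x in Set.Iic w, h x * ga x
    set p := ∫ x in Set.Ioi w, ga x with hp
    set q := ∫ x in Set.Iic w, ga x with hq
    have hpq : p + q = C := by
      rw [hC, ← ga_total, add_comm, hp, hq, intervalIntegral.integral_Iic_add_Ioi ga_int.integrableOn ga_int.integrableOn]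
    have hab : a + b = N * C := by
      rw [hN, div_mul_cancel₀ _ hCpos.ne', add_comm]
      exact intervalIntegral.integral_Iic_add_Ioi hgi.integrableOn hgi.integrableOn
    have ha0 : 0 ≤ a := integral_nonneg fun x => mul_nonneg (h0 x) (ga_pos x).le
    have hb0 : 0 ≤ b := integral_nonneg fun x => mul_nonneg (h0 x) (ga_pos x).le
    have hap : a ≤ p := integral_mono hgi.integrableOn ga_int.integrableOn fun x => mul_le_of_le_one_left (ga_pos x).le (h1 x)
    have hbq : b ≤ q := integral_mono hgi.integrableOn ga_int.integrableOn fun x => mul_le_of_le_one_left (ga_pos x).le (h1 x)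
    have hE := ga_pos w
    have hI : ∫ x in Set.Iic w, (h x - N) * ga x = b - N * q := by
      simp only [sub_mul]
      rw [integral_sub hgi.integrableOn (ga_int.integrableOn.const_mul N), integral_const_mul]
    have m1 := mills w
    have m2 := mills' w
    have hh0 := h0 w
    have hh1 := h1 w
    rw [← hp] at m1
    rw [← hq] at m2
    simp only [hI]
    have hNe : N = (a + b) / C := by rw [hab]; field_simp
    clear_value a b p q C N
    generalize ga w = E at *
    generalize h w = η at *
    have e1 : C * (w * (E⁻¹ * (b - N * q))) = w / E * (b * p - a * q) := by
      rw [hNe]; field_simp; rw [← hpq]; ring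
    have e2 : C * (w * (E⁻¹ * (b - N * q)) + (η - N)) = C * η - (a + b) + w / E * (b * p - a * q) := by
      rw [← e1, hab]; ring
    have goal2 : |C * (w * (E⁻¹ * (b - N * q)) + (η - N))| ≤ C * 1 := by
      rw [e2, abs_le]
      have hη0 : 0 ≤ C * η := by positivity
      have hη1 : C * η ≤ C := mul_le_of_le_one_right hCpos.le hh1
      rcases le_total 0 w with hw | hw
      · have hm : w / E * p ≤ 1 := by
          rw [div_mul_eq_mul_div, div_le_one hE]; exact m1 hw
        have hm0 : 0 ≤ w / E := by positivity
        have x1 : w / E * p * b ≤ b := mul_le_of_le_one_left hb0 hm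
        have x2 : 0 ≤ w / E * (a * q) := by have : 0 ≤ q := hb0.trans hbq
                                            positivity
        have x3 : w / E * (a * q) ≤ w / E * p * q := by
          rw [mul_assoc]
          exact mul_le_mul_of_nonneg_left (mul_le_mul_of_nonneg_right hap (hb0.trans hbq)) hm0
        have x4 : w / E * p * (q - b) ≤ (q - b) := mul_le_of_le_one_left (by linarith) hm
        constructor <;> nlinarith
      · have hm : -w / E * q ≤ 1 := by
          rw [div_mul_eq_mul_div, div_le_one hE]; exact m2 hw
        have hm0 : 0 ≤ -w / E := div_nonneg (by linarith) hE.le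
        have x1 : -w / E * q * a ≤ a := mul_le_of_le_one_left ha0 hm
        have x2 : 0 ≤ -w / E * (b * p) := by have : 0 ≤ p := ha0.trans hap
                                             positivity
        have x3 : -w / E * (b * p) ≤ -w / E * q * p := by
          rw [mul_assoc]
          exact mul_le_mul_of_nonneg_left (mul_le_mul_of_nonneg_right hbq (ha0.trans hap)) hm0
        have x4 : -w / E * q * (p - a) ≤ (p - a) := mul_le_of_le_one_left (by linarith) hm
        rw [neg_div] at *
        constructor <;> nlinarith
    rw [abs_mul, abs_of_pos hCpos] at goal2
    exact le_of_mul_le_mul_left goal2 hCpos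

lemma stein_bound {f : ℝ → ℝ} {h : ℝ → ℝ} {N : ℝ} (h0 : ∀ x, 0 ≤ h x) (h1 : ∀ x, h x ≤ 1)
    (hN0 : 0 ≤ N) (hN1 : N ≤ 1)
    (hd : ∀ w, HasDerivAt f (w * f w + (h w - N)) w)
    (hb : ∀ w, |w * f w + (h w - N)| ≤ 1) (w : ℝ) : |f w| ≤ 3 := by
  have hwf : ∀ w, |w * f w| ≤ 2 := by
    intro w
    have := abs_le.1 (hb w)
    have := h0 w
    have := h1 w
    rw [abs_le]; constructor <;> linarith
  have big : ∀ w, 1 ≤ |w| → |f w| ≤ 2 := by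
    intro w hw
    have := hwf w
    rw [abs_mul] at this
    nlinarith [abs_nonneg (f w)]
  rcases le_total 1 |w| with hw | hw
  · linarith [big w hw]
  · have lip : ∀ x y, |f x - f y| ≤ |x - y| := by
      intro x y
      have := Convex.norm_image_sub_le_of_norm_hasDerivWithin_le (f := f) (s := Set.univ) (C := 1)
        (fun x _ => (hd x).hasDerivWithinAt) (fun x _ => hb x) convex_univ (Set.mem_univ y) (Set.mem_univ x)
      simpa using this
    rw [abs_le] at hw
    rcases le_total 0 w with h | h
    · have a1 := lip w 1
      have a2 := big 1 (by simp)
      rw [abs_of_nonpos (by linarith : w - 1 ≤ 0)] at a1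
      have := abs_sub_abs_le_abs_sub (f w) (f 1)
      linarith
    · have a1 := lip w (-1)
      have a2 := big (-1) (by simp)
      rw [abs_of_nonneg (by linarith : 0 ≤ w - (-1))] at a1
      have := abs_sub_abs_le_abs_sub (f w) (f (-1))
      linarith

lemma stein_g {f : ℝ → ℝ} {h : ℝ → ℝ} {N : ℝ} (h0 : ∀ x, 0 ≤ h x) (h1 : ∀ x, h x ≤ 1)
    (hN0 : 0 ≤ N) (hN1 : N ≤ 1)
    (hd : ∀ w, HasDerivAt f (w * f w + (h w - N)) w)
    (hb : ∀ w, |w * f w + (h w - N)| ≤ 1) (w t : ℝ) (ht : |t| ≤ 1) :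
    |w * f w - (w + t) * f (w + t)| ≤ |t| * (|w| + 4) := by
  have hb3 := stein_bound h0 h1 hN0 hN1 hd hb
  have hd' : ∀ x, HasDerivAt (fun x => x * f x) (1 * f x + x * (x * f x + (h x - N))) x := fun x =>
    (hasDerivAt_id x).mul (hd x)
  have := Convex.norm_image_sub_le_of_norm_hasDerivWithin_le (f := fun x => x * f x)
     (s := Set.Icc (w - |t|) (w + |t|)) (C := |w| + 4)
        (fun x _ => (hd' x).hasDerivWithinAt) (fun x hx => ?_) (convex_Icc _ _)
        (x := w + t) (y := w) ?_ ?_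
  · refine this.trans (le_of_eq ?_)
    rw [mul_comm]; congr 1; simp
  · rw [Real.norm_eq_abs]
    refine (abs_add_le _ _).trans ?_
    rw [one_mul, abs_mul]
    have e1 : |x| ≤ |w| + 1 := by
      have : |x - w| ≤ |t| := by rw [abs_le]; constructor <;> linarith [hx.1, hx.2]
      have := abs_sub_abs_le_abs_sub x w
      linarith
    have := hb3 x
    have := mul_le_of_le_one_right (abs_nonneg x) (hb x)
    linarith
  · constructor <;> [linarith [neg_abs_le t]; linarith [le_abs_self t]]
  · constructor <;> linarith [abs_nonneg t]

/-! smoothing -/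
noncomputable def hh (α u w : ℝ) : ℝ := max 0 (min 1 ((u + α - w) / α))

lemma hh_cont (α u : ℝ) : Continuous (hh α u) := by unfold hh; fun_prop
lemma hh_nonneg (α u w : ℝ) : 0 ≤ hh α u w := le_max_left _ _
lemma hh_le (α u w : ℝ) : hh α u w ≤ 1 := max_le (by norm_num) (min_le_left _ _)
lemma hh_anti {α : ℝ} (hα : 0 < α) (u : ℝ) : Antitone (hh α u) := by
  intro x y hxy
  unfold hh
  gcongr
lemma hh_one {α u w : ℝ} (hα : 0 < α) (h : w ≤ u) : hh α u w = 1 := by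
  unfold hh
  rw [min_eq_left, max_eq_right] <;> try norm_num
  rw [le_div_iff₀ hα]; linarith
lemma hh_zero {α u w : ℝ} (hα : 0 < α) (h : u + α ≤ w) : hh α u w = 0 := by
  unfold hh
  rw [max_eq_left]
  refine (min_le_right _ _).trans ?_
  apply div_nonpos_of_nonpos_of_nonneg <;> linarith

lemma hh_mid {α u w : ℝ} (hα : 0 < α) (h1 : u ≤ w) (h2 : w ≤ u + α) : hh α u w = (u + α - w) / α := by
  unfold hh
  rw [min_eq_right, max_eq_right]
  · apply div_nonneg <;> linarith
  · rw [div_le_one hα]; linarith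

lemma hh_diff {α : ℝ} (hα : 0 < α) (u w s t : ℝ) (hst : s ≤ t) :
    hh α u (w + s) - hh α u (w + t) ≤
      (∫ r in Set.Ioc s t, (Set.Icc u (u + α)).indicator 1 (w + r)) / α := by
  have e : (fun r => (Set.Icc u (u + α)).indicator (1 : ℝ → ℝ) (w + r)) =
      (Set.Icc (u - w) (u + α - w)).indicator 1 := by
    ext r
    simp only [Set.indicator, Set.mem_Icc, Pi.one_apply]
    congr 1
    rw [eq_iff_iff]
    constructor <;> rintro ⟨_, _⟩ <;> constructor <;> linarith
  have e2 : ∫ r in Set.Ioc s t, (Set.Icc u (u + α)).indicator (1 : ℝ → ℝ) (w + r) =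
      volume.real (Set.Ioc (max (u-w) s) (min (u + α - w) t)) := by
    rw [e, integral_indicator_one measurableSet_Icc, measureReal_restrict_apply measurableSet_Icc, measureReal_def, measureReal_def]
    congr 1
    rw [← Set.Ioc_inter_Ioc]
    exact measure_congr (Ioc_ae_eq_Icc.symm.inter (Filter.EventuallyEq.refl _ _))
  rw [e2, le_div_iff₀ hα, Real.volume_real_Ioc]
  unfold hh
  rw [sub_mul, max_mul_of_nonneg _ _ hα.le, max_mul_of_nonneg _ _ hα.le, min_mul_of_nonneg _ _ hα.le,
    min_mul_of_nonneg _ _ hα.le, div_mul_cancel₀ _ hα.ne', div_mul_cancel₀ _ hα.ne']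
  grind

lemma hh_gauss {α : ℝ} (hα : 0 < α) (u : ℝ) :
    (∫ x in Set.Iic u, ga x) ≤ ∫ x, hh α u x * ga x ∧
    (∫ x, hh α u x * ga x) ≤ (∫ x in Set.Iic u, ga x) + α / 2 ∧
    (∫ x in Set.Iic (u + α), ga x) ≤ (∫ x, hh α u x * ga x) + α / 2 := by
  have hgi : Integrable (fun x => hh α u x * ga x) := by
    refine ga_int.mono' ((hh_cont α u).mul ga_cont).aestronglyMeasurable (Filter.Eventually.of_forall fun x => ?_)
    rw [Real.norm_eq_abs, abs_of_nonneg (mul_nonneg (hh_nonneg _ _ x) (ga_pos x).le)]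
    exact mul_le_of_le_one_left (ga_pos x).le (hh_le _ _ x)
  have s1 : (∫ x, hh α u x * ga x) = (∫ x in Set.Iic u, ga x) +
     ∫ x in u..(u+α), hh α u x * ga x := by
    rw [← intervalIntegral.integral_Iic_add_Ioi (b := u + α) hgi.integrableOn hgi.integrableOn]
    have : ∫ x in Set.Ioi (u + α), hh α u x * ga x = 0 := by
      rw [← integral_zero ℝ ℝ (μ := volume.restrict (Set.Ioi (u + α)))]
      apply setIntegral_congr_fun measurableSet_Ioi
      intro x hx
      simp [hh_zero hα (le_of_lt hx)]
    rw [this, ← intervalIntegral.integral_Iic_sub_Iic hgi.integrableOn hgi.integrableOn]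
    have : ∫ x in Set.Iic u, hh α u x * ga x = ∫ x in Set.Iic u, ga x := by
      apply setIntegral_congr_fun measurableSet_Iic
      intro x hx
      simp [hh_one hα hx]
    rw [this]; ring
  have s2 := intervalIntegral.integral_Iic_sub_Iic (a := u) (b := u + α) ga_int.integrableOn ga_int.integrableOn
  have hle : u ≤ u + α := by linarith
  have ga1 : ∀ x, ga x ≤ 1 := fun x => by
    unfold ga; rw [Real.exp_le_one_iff]; nlinarith [sq_nonneg x]
  have i1 : ∫ x in u..(u+α), (u + α - x) / α = α / 2 := by
    rw [intervalIntegral.integral_div, intervalIntegral.integral_sub (by simp) (by simp)]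
    simp
    field_simp; ring
  have i2 : ∫ x in u..(u+α), (x - u) / α = α / 2 := by
    rw [intervalIntegral.integral_div, intervalIntegral.integral_sub (by simp) (by simp)]
    simp
    field_simp; ring
  have c1 : Continuous (fun x => hh α u x * ga x) := (hh_cont α u).mul ga_cont
  refine ⟨?_, ?_, ?_⟩
  · rw [s1]
    have : 0 ≤ ∫ x in u..(u+α), hh α u x * ga x := intervalIntegral.integral_nonneg hle fun x _ =>
      mul_nonneg (hh_nonneg _ _ x) (ga_pos x).le
    linarith
  · rw [s1, ← i1]
    gcongr
    apply intervalIntegral.integral_mono_on hle (c1.intervalIntegrable _ _)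
    · exact Continuous.intervalIntegrable (by fun_prop) _ _
    · intro x hx
      rw [hh_mid hα hx.1 hx.2]
      apply mul_le_of_le_one_right _ (ga1 x)
      apply div_nonneg _ hα.le; linarith [hx.2]
  · rw [s1]
    have : ∫ x in u..(u+α), ga x ≤ (∫ x in u..(u+α), hh α u x * ga x) + α / 2 := by
      rw [← i2, ← intervalIntegral.integral_add (c1.intervalIntegrable _ _)
        (Continuous.intervalIntegrable (by fun_prop) _ _)]
      apply intervalIntegral.integral_mono_on hle (ga_cont.intervalIntegrable _ _)
      · exact Continuous.intervalIntegrable (by fun_prop) _ _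
      · intro x hx
        rw [hh_mid hα hx.1 hx.2]
        have : 1 = (u + α - x) / α + (x - u) / α := by field_simp; ring
        have h2 : (x - u) / α * ga x ≤ (x - u) / α := by
          apply mul_le_of_le_one_right _ (ga1 x)
          apply div_nonneg _ hα.le; linarith [hx.1]
        calc ga x = ((u + α - x) / α + (x - u) / α) * ga x := by rw [← this, one_mul]
          _ ≤ _ := by rw [add_mul]; linarith
    linarith

end LDBE

namespace LDBE

structure Setup {Ω : Type*} [MeasurableSpace Ω] (μ : Measure Ω) {ι : Type*} [Fintype ι]
    (X Y : ι → Ω → ℝ) (W : Ω → ℝ) : Prop where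
  mX : ∀ i, Measurable (X i)
  mY : ∀ i, Measurable (Y i)
  mW : Measurable W
  X2 : ∀ i, MemLp (X i) 2 μ
  Y2 : ∀ i, MemLp (Y i) 2 μ
  W2 : MemLp W 2 μ
  hW : ∀ ω, W ω = ∑ i, X i ω
  hvar : ∫ ω, (W ω) ^ 2 ∂μ = 1
  mean : ∀ i, ∫ ω, X i ω ∂μ = 0
  ind : ∀ i, IndepFun (X i) (fun ω => W ω - Y i ω) μ

variable {Ω : Type*} [MeasurableSpace Ω] {μ : Measure Ω} [IsProbabilityMeasure μ]
    {ι : Type*} [Fintype ι] {X Y : ι → Ω → ℝ} {W : Ω → ℝ}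

noncomputable def KK (X Y : ι → Ω → ℝ) (ω : Ω) (t : ℝ) : ℝ := ∑ i, X i ω * kk (Y i ω) t
noncomputable def mK (μ : Measure Ω) (X Y : ι → Ω → ℝ) (t : ℝ) : ℝ := ∫ ω, KK X Y ω t ∂μ
noncomputable def R2 (μ : Measure Ω) (X Y : ι → Ω → ℝ) : ℝ :=
  ∑ i, ∫ ω, (if 1 < |Y i ω| then |X i ω * Y i ω| else 0) ∂μ
noncomputable def R3 (μ : Measure Ω) (X Y : ι → Ω → ℝ) : ℝ :=
  ∑ i, ∫ ω, |X i ω| * min ((Y i ω) ^ 2) 1 ∂μ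
noncomputable def DD (μ : Measure Ω) (X Y : ι → Ω → ℝ) (p : Ω × ℝ) : ℝ :=
  KK X Y p.1 p.2 - mK μ X Y p.2

lemma ae_snd : ∀ᵐ p : Ω × ℝ ∂(μ.prod nu), |p.2| ≤ 1 := by
  have : ∀ᵐ t ∂nu, |t| ≤ 1 := by
    unfold nu
    filter_upwards [ae_restrict_mem measurableSet_Icc] with t ht
    exact abs_le.2 ht
  exact Measure.quasiMeasurePreserving_snd.ae this

lemma int_prod {F : Ω × ℝ → ℝ} (hF : Measurable F) {B : Ω → ℝ} (hB : Integrable B μ)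
    (h : ∀ ω t, |t| ≤ 1 → |F (ω, t)| ≤ B ω) : Integrable F (μ.prod nu) := by
  refine (hB.comp_fst nu).mono' hF.aestronglyMeasurable ?_
  filter_upwards [ae_snd] with p hp
  exact h p.1 p.2 hp

lemma int_prod' {F : Ω × ℝ → ℝ} (hF : Measurable F) (B : ℝ)
    (h : ∀ ω t, |t| ≤ 1 → |F (ω, t)| ≤ B) : Integrable F (μ.prod nu) :=
  int_prod hF (integrable_const B) h

namespace Setup

lemma iX (H : Setup μ X Y W) (i : ι) : Integrable (X i) μ := (H.X2 i).integrable (by norm_num)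
lemma iW (H : Setup μ X Y W) : Integrable W μ := H.W2.integrable (by norm_num)
lemma iS (H : Setup μ X Y W) : Integrable (fun ω => ∑ i, |X i ω|) μ := integrable_finsetSum _ fun i _ => (H.iX i).abs
lemma iXY (H : Setup μ X Y W) (i : ι) : Integrable (fun ω => X i ω * Y i ω) μ := (H.X2 i).integrable_mul (H.Y2 i)
lemma iXW (H : Setup μ X Y W) (i : ι) : Integrable (fun ω => X i ω * W ω) μ := (H.X2 i).integrable_mul H.W2
lemma i2 (H : Setup μ X Y W) (i : ι) : Integrable (fun ω => if 1 < |Y i ω| then |X i ω * Y i ω| else 0) μ := by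
  refine (H.iXY i).abs.mono' ?_ (Filter.Eventually.of_forall fun ω => ?_)
  · apply Measurable.aestronglyMeasurable
    exact Measurable.ite (measurableSet_lt measurable_const (H.mY i).abs) ((H.mX i).mul (H.mY i)).abs measurable_const
  · split_ifs
    · simp
    · simp only [norm_zero]; positivity
lemma iB (H : Setup μ X Y W) {B : Ω → ℝ} (mB : Measurable B) (i : ι) (hB : Integrable (fun ω => B ω * |X i ω|) μ) :
    Integrable (fun ω => B ω * |X i ω| * min ((Y i ω) ^ 2) 1) μ := by
  have := H.mX i
  have := H.mY i
  refine hB.abs.mono' (by fun_prop) (Filter.Eventually.of_forall fun ω => ?_)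
  rw [Real.norm_eq_abs, abs_mul]
  apply mul_le_of_le_one_right (abs_nonneg _)
  rw [abs_of_nonneg (by positivity)]
  exact min_le_right _ _

lemma mKK (H : Setup μ X Y W) : Measurable (fun p : Ω × ℝ => KK X Y p.1 p.2) := by
  unfold KK
  refine Finset.measurable_fun_sum _ fun i _ => ?_
  refine ((H.mX i).comp measurable_fst).mul ?_
  exact measurable_kk.comp (((H.mY i).comp measurable_fst).prodMk measurable_snd)

lemma KK_le (ω : Ω) (t : ℝ) : |KK X Y ω t| ≤ ∑ i, |X i ω| := by
  unfold KK
  refine (Finset.abs_sum_le_sum_abs _ _).trans (Finset.sum_le_sum fun i _ => ?_)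
  rw [abs_mul]
  exact mul_le_of_le_one_right (abs_nonneg _) (abs_kk_le _ _)

lemma iKKω (H : Setup μ X Y W) (t : ℝ) : Integrable (fun ω => KK X Y ω t) μ :=
  H.iS.mono' (H.mKK.comp (measurable_id.prodMk measurable_const)).aestronglyMeasurable
    (Filter.Eventually.of_forall fun ω => KK_le ω t)

lemma mmK (H : Setup μ X Y W) : Measurable (mK μ X Y) := by
  unfold mK
  exact (H.mKK.stronglyMeasurable.integral_prod_left' (μ := μ)).measurable

lemma mK_le (H : Setup μ X Y W) (t : ℝ) : |mK μ X Y t| ≤ ∫ ω, ∑ i, |X i ω| ∂μ := by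
  unfold mK
  exact (abs_integral_le_integral_abs).trans (integral_mono (H.iKKω t).abs H.iS fun ω => KK_le ω t)

lemma mDD (H : Setup μ X Y W) : Measurable (DD μ X Y) := H.mKK.sub (H.mmK.comp measurable_snd)

lemma DD_le (H : Setup μ X Y W) (p : Ω × ℝ) : |DD μ X Y p| ≤ ∑ i, |X i p.1| + ∫ ω, ∑ i, |X i ω| ∂μ := by
  unfold DD
  refine (abs_sub _ _).trans (add_le_add (KK_le _ _) (H.mK_le _))

lemma iDD (H : Setup μ X Y W) : Integrable (DD μ X Y) (μ.prod nu) :=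
  int_prod H.mDD (H.iS.add (integrable_const _)) fun ω t _ => H.DD_le (ω, t)

lemma iDD2 (H : Setup μ X Y W) : Integrable (fun p => DD μ X Y p ^ 2) (μ.prod nu) := by
  have hS : MemLp (fun ω => ∑ i, |X i ω| + ∫ ω, ∑ i, |X i ω| ∂μ) 2 μ :=
    (memLp_finsetSum _ fun i _ => (H.X2 i).abs).add (memLp_const _)
  refine int_prod (H.mDD.pow_const 2) hS.integrable_sq fun ω t _ => ?_
  rw [abs_pow]
  exact pow_le_pow_left₀ (abs_nonneg _) (H.DD_le (ω, t)) 2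

lemma itDD2 (H : Setup μ X Y W) : Integrable (fun p => |p.2| * DD μ X Y p ^ 2) (μ.prod nu) := by
  refine H.iDD2.mono' ?_ ?_
  · have := H.mDD
    exact Measurable.aestronglyMeasurable (by fun_prop)
  · filter_upwards [ae_snd] with p hp
    rw [Real.norm_eq_abs, abs_of_nonneg (by positivity)]
    exact mul_le_of_le_one_left (by positivity) hp

lemma var_eq (H : Setup μ X Y W) (t : ℝ) : variance (fun ω => KK X Y ω t) μ = ∫ ω, DD μ X Y (ω, t) ^ 2 ∂μ := by
  have hm : Measurable (fun ω => KK X Y ω t) := H.mKK.comp (measurable_id.prodMk measurable_const)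
  rw [variance_eq_integral hm.aemeasurable]
  rfl

lemma r5_eq (H : Setup μ X Y W) : ∫ t, variance (fun ω => KK X Y ω t) μ ∂nu = ∫ p, DD μ X Y p ^ 2 ∂(μ.prod nu) := by
  rw [integral_prod_symm _ H.iDD2]
  simp only [H.var_eq]

lemma r6_eq (H : Setup μ X Y W) : ∫ t, |t| * variance (fun ω => KK X Y ω t) μ ∂nu =
    ∫ p, |p.2| * DD μ X Y p ^ 2 ∂(μ.prod nu) := by
  rw [integral_prod_symm _ H.itDD2]
  simp only [H.var_eq, integral_const_mul]

/-- |t|-weighted bound -/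
lemma tK (H : Setup μ X Y W) {B : Ω → ℝ} (mB : Measurable B) (hB0 : ∀ ω, 0 ≤ B ω)
    (hB : ∀ i, Integrable (fun ω => B ω * |X i ω|) μ) :
    Integrable (fun p : Ω × ℝ => |p.2| * B p.1 * |KK X Y p.1 p.2|) (μ.prod nu) ∧
    ∫ p, |p.2| * B p.1 * |KK X Y p.1 p.2| ∂(μ.prod nu) ≤
      ∑ i, ∫ ω, B ω * |X i ω| * min ((Y i ω) ^ 2) 1 ∂μ := by
  have mi : ∀ i, Measurable (fun p : Ω × ℝ => B p.1 * |X i p.1| * (|p.2| * |kk (Y i p.1) p.2|)) := by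
    intro i
    have h1 : Measurable (fun p : Ω × ℝ => kk (Y i p.1) p.2) :=
      measurable_kk.comp (((H.mY i).comp measurable_fst).prodMk measurable_snd)
    have := H.mX i
    fun_prop
  have ii : ∀ i, Integrable (fun p : Ω × ℝ => B p.1 * |X i p.1| * (|p.2| * |kk (Y i p.1) p.2|)) (μ.prod nu) := by
    intro i
    refine int_prod (mi i) (hB i) fun ω t ht => ?_
    have := hB0 ω
    rw [abs_of_nonneg (by positivity)]
    apply mul_le_of_le_one_right (by positivity)
    exact mul_le_one₀ ht (abs_nonneg _) (abs_kk_le _ _)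
  have hle : ∀ p : Ω × ℝ, |p.2| * B p.1 * |KK X Y p.1 p.2| ≤
      ∑ i, B p.1 * |X i p.1| * (|p.2| * |kk (Y i p.1) p.2|) := by
    intro p
    have h1 : |KK X Y p.1 p.2| ≤ ∑ i, |X i p.1| * |kk (Y i p.1) p.2| := by
      unfold KK
      refine (Finset.abs_sum_le_sum_abs _ _).trans (le_of_eq ?_)
      simp [abs_mul]
    calc _ ≤ |p.2| * B p.1 * ∑ i, |X i p.1| * |kk (Y i p.1) p.2| :=
          mul_le_mul_of_nonneg_left h1 (mul_nonneg (abs_nonneg _) (hB0 _))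
      _ = _ := by
        rw [Finset.mul_sum]; apply Finset.sum_congr rfl; intro i _; ring
  have iS := integrable_finsetSum Finset.univ fun i _ => ii i
  have i0 : Integrable (fun p : Ω × ℝ => |p.2| * B p.1 * |KK X Y p.1 p.2|) (μ.prod nu) := by
    refine iS.mono' ?_ (Filter.Eventually.of_forall fun p => ?_)
    · have := H.mKK
      exact Measurable.aestronglyMeasurable (by fun_prop)
    · rw [Real.norm_eq_abs, abs_of_nonneg]
      · exact hle p
      · exact mul_nonneg (mul_nonneg (abs_nonneg _) (hB0 _)) (abs_nonneg _)
  refine ⟨i0, (integral_mono i0 iS hle).trans ?_⟩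
  rw [integral_finsetSum _ fun i _ => ii i]
  refine Finset.sum_le_sum fun i _ => ?_
  rw [integral_prod _ (ii i)]
  refine integral_mono (ii i).integral_prod_left (H.iB mB i (hB i)) fun ω => ?_
  simp only [integral_const_mul]
  exact mul_le_mul_of_nonneg_left (kk_t _) (mul_nonneg (hB0 _) (abs_nonneg _))

lemma tK1 (H : Setup μ X Y W) : Integrable (fun p : Ω × ℝ => |p.2| * |KK X Y p.1 p.2|) (μ.prod nu) ∧
    ∫ p, |p.2| * |KK X Y p.1 p.2| ∂(μ.prod nu) ≤ R3 μ X Y := by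
  have := H.tK (B := fun _ => 1) measurable_const (by simp) (fun i => by simpa using (H.iX i).abs)
  simpa [R3] using this

lemma tmK (H : Setup μ X Y W) : ∫ t, |t| * |mK μ X Y t| ∂nu ≤ R3 μ X Y := by
  refine le_trans ?_ H.tK1.2
  rw [integral_prod_symm _ H.tK1.1]
  refine integral_mono_of_nonneg (Filter.Eventually.of_forall fun t => by positivity)
    H.tK1.1.integral_prod_right (Filter.Eventually.of_forall fun t => ?_)
  dsimp only
  rw [integral_const_mul]
  exact mul_le_mul_of_nonneg_left abs_integral_le_integral_abs (abs_nonneg _)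

lemma EXY (H : Setup μ X Y W) (i : ι) : ∫ ω, X i ω * W ω ∂μ = ∫ ω, X i ω * Y i ω ∂μ := by
  have h := (H.ind i).integral_fun_mul_eq_mul_integral (H.mX i).aestronglyMeasurable
    (H.mW.sub (H.mY i)).aestronglyMeasurable
  rw [H.mean i, zero_mul] at h
  simp only [mul_sub] at h
  rw [integral_sub (H.iXW i) (H.iXY i)] at h
  linarith

lemma sumEXY (H : Setup μ X Y W) : ∑ i, ∫ ω, X i ω * Y i ω ∂μ = 1 := by
  simp only [← H.EXY]
  rw [← integral_finsetSum _ fun i _ => H.iXW i, ← H.hvar]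
  congr 1; ext ω
  rw [← Finset.sum_mul, ← H.hW, sq]

lemma iG (H : Setup μ X Y W) (g : ℝ → ℝ) (hg : Continuous g) {M : ℝ} (hM : ∀ t, |g t| ≤ M) (i : ι) :
    Integrable (fun p : Ω × ℝ => X i p.1 * (g (W p.1 + p.2) * kk (Y i p.1) p.2)) (μ.prod nu) := by
  have h1 : Measurable (fun p : Ω × ℝ => kk (Y i p.1) p.2) :=
      measurable_kk.comp (((H.mY i).comp measurable_fst).prodMk measurable_snd)
  have := H.mX i
  have := H.mW
  have := hg.measurable
  have hM0 : 0 ≤ M := (abs_nonneg _).trans (hM 0)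
  refine int_prod (by fun_prop) ((H.iX i).abs.mul_const M) fun ω t ht => ?_
  rw [abs_mul]
  apply mul_le_mul_of_nonneg_left _ (abs_nonneg _)
  rw [abs_mul]
  calc _ ≤ M * 1 := mul_le_mul (hM _) (abs_kk_le _ _) (abs_nonneg _) hM0
    _ = M := mul_one _

lemma gK_eq (H : Setup μ X Y W) (g : ℝ → ℝ) (hg : Continuous g) {M : ℝ} (hM : ∀ t, |g t| ≤ M) :
    ∫ p, g (W p.1 + p.2) * KK X Y p.1 p.2 ∂(μ.prod nu) =
      ∑ i, ∫ ω, X i ω * ∫ t, g (W ω + t) * kk (Y i ω) t ∂nu ∂μ := by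
  have : ∀ p : Ω × ℝ, g (W p.1 + p.2) * KK X Y p.1 p.2 =
      ∑ i, X i p.1 * (g (W p.1 + p.2) * kk (Y i p.1) p.2) := by
    intro p; unfold KK; rw [Finset.mul_sum]; apply Finset.sum_congr rfl; intro i _; ring
  simp only [this]
  rw [integral_finsetSum _ fun i _ => H.iG g hg hM i]
  apply Finset.sum_congr rfl; intro i _
  rw [integral_prod _ (H.iG g hg hM i)]
  simp only [integral_const_mul]

lemma stein1 (H : Setup μ X Y W) {f g : ℝ → ℝ} (hd : ∀ w, HasDerivAt f (g w) w) (hg : Continuous g) {M B : ℝ}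
    (hM : ∀ t, |g t| ≤ M) (hB : ∀ t, |f t| ≤ B) :
    |(∫ ω, W ω * f (W ω) ∂μ) - ∫ p, g (W p.1 + p.2) * KK X Y p.1 p.2 ∂(μ.prod nu)| ≤ M * R2 μ X Y := by
  have hfc : Continuous f := continuous_iff_continuousAt.2 fun x => (hd x).continuousAt
  have mf := hfc.measurable
  have mW := H.mW
  have ibd : ∀ (i : ι) (Z : Ω → ℝ), Measurable Z → Integrable (fun ω => X i ω * f (Z ω)) μ := by
    intro i Z hZ
    have := H.mX i
    refine ((H.iX i).abs.mul_const B).mono' (Measurable.aestronglyMeasurable (by fun_prop))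
      (Filter.Eventually.of_forall fun ω => ?_)
    rw [Real.norm_eq_abs, abs_mul]
    exact mul_le_mul_of_nonneg_left (hB _) (abs_nonneg _)
  have e1 : ∫ ω, W ω * f (W ω) ∂μ = ∑ i, ∫ ω, (X i ω * f (W ω) - X i ω * f (W ω - Y i ω)) ∂μ := by
    have : ∀ ω, W ω * f (W ω) = ∑ i, X i ω * f (W ω) := by
      intro ω; rw [← Finset.sum_mul, ← H.hW]
    simp only [this]
    rw [integral_finsetSum _ fun i _ => ibd i W mW]
    apply Finset.sum_congr rfl; intro i _
    rw [integral_sub (ibd i W mW) (ibd i (fun ω => W ω - Y i ω) (mW.sub (H.mY i)))]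
    have hi : IndepFun (X i) (fun ω => f (W ω - Y i ω)) μ := (H.ind i).comp measurable_id mf
    have h := hi.integral_fun_mul_eq_mul_integral (H.mX i).aestronglyMeasurable
      (mf.comp (mW.sub (H.mY i))).aestronglyMeasurable
    rw [h, H.mean i]; simp
  rw [e1, H.gK_eq g hg hM, ← Finset.sum_sub_distrib, R2, Finset.mul_sum]
  refine (Finset.abs_sum_le_sum_abs _ _).trans (Finset.sum_le_sum fun i _ => ?_)
  have ib : Integrable (fun ω => X i ω * ∫ t, g (W ω + t) * kk (Y i ω) t ∂nu) μ := by
    have := (H.iG g hg hM i).integral_prod_left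
    simpa only [integral_const_mul] using this
  have ia : Integrable (fun ω => X i ω * f (W ω) - X i ω * f (W ω - Y i ω)) μ :=
    (ibd i W mW).sub (ibd i (fun ω => W ω - Y i ω) (mW.sub (H.mY i)))
  rw [← integral_sub ia ib, ← integral_const_mul]
  refine abs_integral_le_integral_abs.trans (integral_mono (ia.sub ib).abs ((H.i2 i).const_mul M) fun ω => ?_)
  have e2 : f (W ω) - f (W ω - Y i ω) = ∫ t in (-Y i ω)..0, g (W ω + t) := by
    rw [intervalIntegral.integral_comp_add_left (fun x => g x) (W ω)]
    rw [intervalIntegral.integral_eq_sub_of_hasDerivAt (fun x _ => hd x) (hg.intervalIntegrable _ _)]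
    simp [sub_eq_add_neg]
  have e3 := kk_tail (Y i ω) (g := fun t => g (W ω + t)) (by fun_prop) (fun t => hM _)
  dsimp only [Pi.sub_apply]
  rw [← mul_sub, e2, ← mul_sub, abs_mul]
  refine (mul_le_mul_of_nonneg_left e3 (abs_nonneg _)).trans (le_of_eq ?_)
  split_ifs
  · rw [abs_mul]; ring
  · simp

lemma tail1 (H : Setup μ X Y W) (ω : Ω) : |∑ i, X i ω * Y i ω - ∫ t, KK X Y ω t ∂nu| ≤
    ∑ i, (if 1 < |Y i ω| then |X i ω * Y i ω| else 0) := by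
  have ik : ∀ i, Integrable (fun t => kk (Y i ω) t) nu := fun i =>
    (integrable_const (1 : ℝ)).mono'
      (measurable_kk.comp (measurable_const.prodMk measurable_id)).aestronglyMeasurable
      (Filter.Eventually.of_forall fun t => abs_kk_le _ _)
  unfold KK
  rw [integral_finsetSum _ fun i _ => (ik i).const_mul _, ← Finset.sum_sub_distrib]
  refine (Finset.abs_sum_le_sum_abs _ _).trans (Finset.sum_le_sum fun i _ => ?_)
  have := kk_tail (Y i ω) (g := fun _ => 1) continuous_const (M := 1) (by simp)
  simp only [intervalIntegral.integral_const, one_mul, smul_eq_mul, mul_one, sub_neg_eq_add, zero_add] at this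
  rw [integral_const_mul, ← mul_sub, abs_mul]
  refine (mul_le_mul_of_nonneg_left this (abs_nonneg _)).trans (le_of_eq ?_)
  split_ifs
  · rw [abs_mul]
  · simp

lemma iKK (H : Setup μ X Y W) : Integrable (fun p : Ω × ℝ => KK X Y p.1 p.2) (μ.prod nu) :=
  int_prod H.mKK H.iS fun ω t _ => KK_le ω t

lemma imK (H : Setup μ X Y W) : Integrable (mK μ X Y) nu :=
  (integrable_const (∫ ω, ∑ i, |X i ω| ∂μ)).mono' H.mmK.aestronglyMeasurable
    (Filter.Eventually.of_forall fun t => H.mK_le t)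

lemma tail2 (H : Setup μ X Y W) : |1 - ∫ t, mK μ X Y t ∂nu| ≤ R2 μ X Y := by
  unfold mK
  rw [← integral_prod_symm _ H.iKK, integral_prod _ H.iKK, ← H.sumEXY,
    ← integral_finsetSum _ fun i _ => H.iXY i, ← integral_sub (integrable_finsetSum _ fun i _ => H.iXY i) H.iKK.integral_prod_left, R2, ← integral_finsetSum _ fun i _ => H.i2 i]
  exact abs_integral_le_integral_abs.trans (integral_mono
    ((integrable_finsetSum _ fun i _ => H.iXY i).sub H.iKK.integral_prod_left).abs
    (integrable_finsetSum _ fun i _ => H.i2 i) fun ω => H.tail1 ω)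

lemma R3_pos (H : Setup μ X Y W) : 0 < R3 μ X Y := by
  have i3 : ∀ i, Integrable (fun ω => |X i ω| * min ((Y i ω) ^ 2) 1) μ := fun i => by
    simpa using H.iB (B := fun _ => 1) measurable_const i (by simpa using (H.iX i).abs)
  have hn : ∀ i, 0 ≤ ∫ ω, |X i ω| * min ((Y i ω) ^ 2) 1 ∂μ := fun i =>
    integral_nonneg fun ω => by positivity
  refine lt_of_le_of_ne (Finset.sum_nonneg fun i _ => hn i) fun h => ?_
  have h0 := (Finset.sum_eq_zero_iff_of_nonneg fun i _ => hn i).1 h.symm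
  have : ∑ i, ∫ ω, X i ω * Y i ω ∂μ = 0 := by
    apply Finset.sum_eq_zero
    intro i hi
    have := (integral_eq_zero_iff_of_nonneg (fun ω => by positivity) (i3 i)).1 (h0 i hi)
    rw [← integral_zero Ω ℝ (μ := μ)]
    apply integral_congr_ae
    filter_upwards [this] with ω hω
    simp only [Pi.zero_apply, mul_eq_zero, abs_eq_zero] at hω
    rcases hω with h | h
    · simp [h]
    · have : Y i ω ^ 2 = 0 := by
        rcases min_choice (Y i ω ^ 2) 1 with h' | h' <;> rw [h'] at h
        · exact h
        · norm_num at h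
      simp [pow_eq_zero_iff] at this
      simp [this]
  rw [H.sumEXY] at this
  norm_num at this

lemma hh_exp (H : Setup μ X Y W) {α S : ℝ} (hα : 0 < α) (hS : ∀ x, μ.real {ω | x ≤ W ω ∧ W ω ≤ x + α} ≤ S)
    (u : ℝ) {s t : ℝ} (hst : s ≤ t) :
    ∫ ω, (hh α u (W ω + s) - hh α u (W ω + t)) ∂μ ≤ (t - s) * S / α := by
  have mW := H.mW
  have mI : Measurable (fun p : Ω × ℝ => (Set.Icc u (u + α)).indicator (1 : ℝ → ℝ) (W p.1 + p.2)) :=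
    (measurable_one.indicator measurableSet_Icc).comp (by fun_prop)
  have iI : Integrable (fun p : Ω × ℝ => (Set.Icc u (u + α)).indicator (1 : ℝ → ℝ) (W p.1 + p.2))
      (μ.prod (volume.restrict (Set.Ioc s t))) := by
    refine (integrable_const (1 : ℝ)).mono' mI.aestronglyMeasurable (Filter.Eventually.of_forall fun p => ?_)
    simp only [Set.indicator]; split_ifs <;> simp
  have mh := (hh_cont α u).measurable
  have ih : ∀ s, Integrable (fun ω => hh α u (W ω + s)) μ := fun s =>
    (integrable_const (1 : ℝ)).mono' (Measurable.aestronglyMeasurable (by fun_prop))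
      (Filter.Eventually.of_forall fun ω => by
        rw [Real.norm_eq_abs, abs_of_nonneg (hh_nonneg _ _ _)]; exact hh_le _ _ _)
  calc _ ≤ ∫ ω, (∫ r in Set.Ioc s t, (Set.Icc u (u + α)).indicator 1 (W ω + r)) / α ∂μ :=
        integral_mono ((ih s).sub (ih t)) (iI.integral_prod_left.div_const α) fun ω => hh_diff hα u _ s t hst
    _ = (∫ r in Set.Ioc s t, ∫ ω, (Set.Icc u (u + α)).indicator (1 : ℝ → ℝ) (W ω + r) ∂μ) / α := by
        rw [integral_div, ← integral_prod_symm _ iI, integral_prod _ iI]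
    _ ≤ (∫ r in Set.Ioc s t, S) / α := by
        apply div_le_div_of_nonneg_right _ hα.le
        refine integral_mono iI.integral_prod_right (integrable_const _) fun r => ?_
        have : (fun ω => (Set.Icc u (u + α)).indicator (1 : ℝ → ℝ) (W ω + r)) =
            Set.indicator {ω | u - r ≤ W ω ∧ W ω ≤ u - r + α} 1 := by
          ext ω
          simp only [Set.indicator, Set.mem_Icc, Set.mem_ofPred_eq, Pi.one_apply]
          congr 1
          rw [eq_iff_iff]
          constructor <;> rintro ⟨_, _⟩ <;> constructor <;> linarith
        dsimp only
        rw [this, integral_indicator_one]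
        · exact hS _
        · exact (measurableSet_le measurable_const mW).inter (measurableSet_le mW measurable_const)
    _ = _ := by
        simp [hst]

/-- absolute form -/
lemma hh_abs (H : Setup μ X Y W) {α S : ℝ} (hα : 0 < α) (hS : ∀ x, μ.real {ω | x ≤ W ω ∧ W ω ≤ x + α} ≤ S)
    (u t : ℝ) : ∫ ω, |hh α u (W ω) - hh α u (W ω + t)| ∂μ ≤ |t| * S / α := by
  rcases le_total 0 t with ht | ht
  · have := H.hh_exp hα hS u ht
    rw [abs_of_nonneg ht]
    simp only [add_zero, sub_zero] at this
    refine le_trans (le_of_eq ?_) this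
    congr 1; ext ω
    exact abs_of_nonneg (sub_nonneg.2 (hh_anti hα u (by linarith)))
  · have := H.hh_exp hα hS u ht
    rw [abs_of_nonpos ht]
    simp only [add_zero, zero_sub] at this
    refine le_trans (le_of_eq ?_) this
    congr 1; ext ω
    rw [abs_sub_comm]
    exact abs_of_nonneg (sub_nonneg.2 (hh_anti hα u (by linarith)))

end Setup
end LDBE

namespace LDBE

lemma hh_lip {α : ℝ} (hα : 0 < α) (u x y : ℝ) : |hh α u x - hh α u y| ≤ |x - y| / α := by
  have e : |x - y| / α = |(u + α - x) / α - (u + α - y) / α| := by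
    rw [← sub_div, abs_div, abs_of_pos hα, abs_sub_comm]; congr 2; ring
  rw [e]; unfold hh
  generalize (u + α - x) / α = p
  generalize (u + α - y) / α = q
  refine (abs_max_sub_max_le_max _ _ _ _).trans ?_
  refine max_le (by simp) ((abs_min_sub_min_le_max _ _ _ _).trans (max_le (by simp) le_rfl))

lemma hh_mono_u {α : ℝ} (hα : 0 < α) {u v : ℝ} (h : u ≤ v) (w : ℝ) : hh α u w ≤ hh α v w := by
  unfold hh; gcongr

/-- trapezoid antiderivative -/
lemma trap_bound {g : ℝ → ℝ} (hg : Continuous g) (h0 : ∀ x, 0 ≤ g x) (h1 : ∀ x, g x ≤ 1)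
    {c d : ℝ} (hcd : c ≤ d) (hz : ∀ x, x ∉ Set.Icc c d → g x = 0) (w : ℝ) :
    |∫ x in ((c + d) / 2)..w, g x| ≤ (d - c) / 2 := by
  have hind : ∀ x, g x ≤ (Set.Icc c d).indicator 1 x := by
    intro x
    by_cases hx : x ∈ Set.Icc c d
    · simp [hx, h1 x]
    · simp [hx, hz x hx]
  have key : ∀ s t, s ≤ t → 0 ≤ ∫ x in Set.Ioc s t, g x ∧
      ∫ x in Set.Ioc s t, g x ≤ volume.real (Set.Icc c d ∩ Set.Ioc s t) := by
    intro s t hst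
    refine ⟨integral_nonneg h0, ?_⟩
    rw [← measureReal_restrict_apply measurableSet_Icc, ← integral_indicator_one measurableSet_Icc]
    refine integral_mono ?_ ?_ hind
    · exact (hg.integrableOn_Icc (a := s) (b := t)).mono_set Set.Ioc_subset_Icc_self
    · exact (integrable_const (1:ℝ)).indicator measurableSet_Icc
  rcases le_total ((c + d) / 2) w with hw | hw
  · obtain ⟨k0, k1⟩ := key _ _ hw
    rw [intervalIntegral.integral_of_le hw, abs_of_nonneg k0]
    refine k1.trans ((measureReal_mono (s₂ := Set.Icc ((c + d) / 2) d) ?_ ?_).trans ?_)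
    · rintro x ⟨⟨_, _⟩, ⟨_, _⟩⟩; constructor <;> linarith
    · simp
    · rw [Real.volume_real_Icc_of_le] <;> linarith
  · obtain ⟨k0, k1⟩ := key _ _ hw
    rw [intervalIntegral.integral_of_ge hw, abs_neg, abs_of_nonneg k0]
    refine k1.trans ((measureReal_mono (s₂ := Set.Icc c ((c + d) / 2)) ?_ ?_).trans ?_)
    · rintro x ⟨⟨_, _⟩, ⟨_, _⟩⟩; constructor <;> linarith
    · simp
    · rw [Real.volume_real_Icc_of_le] <;> linarith

lemma trap_sq {g : ℝ → ℝ} (hg : Continuous g) (h0 : ∀ x, 0 ≤ g x) (h1 : ∀ x, g x ≤ 1)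
    {c d : ℝ} (hcd : c ≤ d) (hz : ∀ x, x ∉ Set.Icc c d → g x = 0) (w : ℝ) :
    ∫ t, g (w + t) ^ 2 ∂nu ≤ d - c := by
  have hind : ∀ t, g (w + t) ^ 2 ≤ (Set.Icc (c - w) (d - w)).indicator 1 t := by
    intro t
    by_cases hx : t ∈ Set.Icc (c - w) (d - w)
    · rw [Set.indicator_of_mem hx]; exact pow_le_one₀ (h0 _) (h1 _)
    · rw [hz (w + t)]
      · simp [hx]
      · intro h; apply hx; constructor <;> linarith [h.1, h.2]
  calc _ ≤ ∫ t, (Set.Icc (c - w) (d - w)).indicator (1 : ℝ → ℝ) t ∂nu :=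
        integral_mono_of_nonneg (Filter.Eventually.of_forall fun t => by positivity)
          ((integrable_const (1:ℝ)).indicator measurableSet_Icc) (Filter.Eventually.of_forall hind)
    _ = nu.real (Set.Icc (c - w) (d - w)) := integral_indicator_one measurableSet_Icc
    _ ≤ volume.real (Set.Icc (c - w) (d - w)) := by
        unfold nu
        rw [measureReal_restrict_apply measurableSet_Icc]
        exact measureReal_mono Set.inter_subset_left (by simp)
    _ = _ := by rw [Real.volume_real_Icc_of_le] <;> linarith

variable {Ω : Type*} [MeasurableSpace Ω] {μ : Measure Ω} [IsProbabilityMeasure μ]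
    {ι : Type*} [Fintype ι] {X Y : ι → Ω → ℝ} {W : Ω → ℝ}

noncomputable def R5 (μ : Measure Ω) (X Y : ι → Ω → ℝ) : ℝ := ∫ p, DD μ X Y p ^ 2 ∂(μ.prod nu)

namespace Setup

lemma EW_abs (H : Setup μ X Y W) : ∫ ω, |W ω| ∂μ ≤ 1 := by
  have h : ∫ ω, |W ω| ∂μ ≤ ∫ ω, (1 + W ω ^ 2) / 2 ∂μ := by
    refine integral_mono H.iW.abs (((integrable_const 1).add H.W2.integrable_sq).div_const 2) fun ω => ?_
    dsimp only
    nlinarith [sq_nonneg (|W ω| - 1), sq_abs (W ω)]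
  rw [integral_div, integral_add (integrable_const 1) H.W2.integrable_sq, H.hvar] at h
  simpa using h

lemma bdd_int (H : Setup μ X Y W) {F : ℝ → ℝ} (hF : Measurable F) {M : ℝ} (hM : ∀ x, |F x| ≤ M) (t : ℝ) :
    Integrable (fun ω => F (W ω + t)) μ := by
  have := H.mW
  exact (integrable_const M).mono' (Measurable.aestronglyMeasurable (by fun_prop))
    (Filter.Eventually.of_forall fun ω => hM _)

set_option maxHeartbeats 2000000 in
lemma conc (H : Setup μ X Y W) {γ S : ℝ} (hγ : 0 < γ) (hS : ∀ x, μ.real {ω | x ≤ W ω ∧ W ω ≤ x + γ} ≤ S)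
    (a b : ℝ) (hab : a ≤ b) : μ.real {ω | a ≤ W ω ∧ W ω ≤ b} ≤
      0.625 * (b - a) + 1.25 * γ + 2 * R2 μ X Y + 2 * R5 μ X Y + R3 μ X Y * S / γ := by
  have hS0 : 0 ≤ S := measureReal_nonneg.trans (hS 0)
  have mW := H.mW
  obtain ⟨g, hgdef⟩ : ∃ g : ℝ → ℝ, g = fun w => hh γ b w - hh γ (a - γ) w := ⟨_, rfl⟩
  have hg : Continuous g := by rw [hgdef]; exact (hh_cont _ _).sub (hh_cont _ _)
  have mg := hg.measurable
  have g0 : ∀ x, 0 ≤ g x := fun x => by rw [hgdef]; exact sub_nonneg.2 (hh_mono_u hγ (by linarith) x)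
  have g1 : ∀ x, g x ≤ 1 := fun x => by
    have := hh_le γ b x; have := hh_nonneg γ (a - γ) x; simp only [hgdef]; linarith
  have gabs : ∀ x, |g x| ≤ 1 := fun x => by rw [abs_of_nonneg (g0 x)]; exact g1 x
  have gz : ∀ x, x ∉ Set.Icc (a - γ) (b + γ) → g x = 0 := by
    intro x hx
    simp only [Set.mem_Icc, not_and_or, not_le] at hx
    rcases hx with hx | hx
    · simp only [hgdef]; rw [hh_one hγ (by linarith), hh_one hγ (by linarith)]; ring
    · simp only [hgdef]; rw [hh_zero hγ (by linarith), hh_zero hγ (by linarith)]; ring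
  have gone : ∀ x, a ≤ x → x ≤ b → g x = 1 := by
    intro x h1 h2
    simp only [hgdef]; rw [hh_one hγ h2, hh_zero hγ (by linarith)]; ring
  have hcd : a - γ ≤ b + γ := by linarith
  obtain ⟨f, hf⟩ : ∃ f : ℝ → ℝ, f = fun w => ∫ x in ((a - γ + (b + γ)) / 2)..w, g x := ⟨_, rfl⟩
  have hd : ∀ w, HasDerivAt f (g w) w := fun w => by
    rw [hf]
    exact intervalIntegral.integral_hasDerivAt_right (hg.intervalIntegrable _ _)
        (hg.stronglyMeasurableAtFilter _ _) hg.continuousAt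
  have fb : ∀ w, |f w| ≤ (b + γ - (a - γ)) / 2 := fun w => by
    rw [hf]; exact trap_bound hg g0 g1 hcd gz w
  have mf : Measurable f := (continuous_iff_continuousAt.2 fun x => (hd x).continuousAt).measurable
  set Bd := (b + γ - (a - γ)) / 2 with hBd
  have hst := H.stein1 hd hg gabs fb
  -- upper bound on the left side
  have u1 : ∫ ω, W ω * f (W ω) ∂μ ≤ Bd := by
    calc _ ≤ ∫ ω, |W ω| * Bd ∂μ := by
          refine integral_mono ?_ (H.iW.abs.mul_const _) fun ω => ?_
          · refine (H.iW.abs.mul_const Bd).mono' (Measurable.aestronglyMeasurable (by fun_prop))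
              (Filter.Eventually.of_forall fun ω => ?_)
            rw [Real.norm_eq_abs, abs_mul]
            exact mul_le_mul_of_nonneg_left (fb _) (abs_nonneg _)
          · refine (le_abs_self _).trans ?_
            rw [abs_mul]
            exact mul_le_mul_of_nonneg_left (fb _) (abs_nonneg _)
      _ ≤ Bd := by
          rw [integral_mul_const]
          exact mul_le_of_le_one_left (by rw [hBd]; linarith) H.EW_abs
  -- splitting
  have mmK := H.mmK
  have mDD := H.mDD
  have iP1 : Integrable (fun p : Ω × ℝ => g (W p.1 + p.2) * DD μ X Y p) (μ.prod nu) := by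
    refine H.iDD.abs.mono' (Measurable.aestronglyMeasurable (by fun_prop)) (Filter.Eventually.of_forall fun p => ?_)
    rw [Real.norm_eq_abs, abs_mul]
    exact mul_le_of_le_one_left (abs_nonneg _) (gabs _)
  have iP2 : Integrable (fun p : Ω × ℝ => g (W p.1 + p.2) * mK μ X Y p.2) (μ.prod nu) := by
    refine int_prod' (by fun_prop) (∫ ω, ∑ i, |X i ω| ∂μ) fun ω t _ => ?_
    rw [abs_mul]
    exact (mul_le_of_le_one_left (abs_nonneg _) (gabs _)).trans (H.mK_le t)
  have iP3 : Integrable (fun p : Ω × ℝ => g (W p.1 + p.2) ^ 2) (μ.prod nu) := by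
    refine int_prod' (by fun_prop) 1 fun ω t _ => ?_
    rw [abs_pow]; exact pow_le_one₀ (abs_nonneg _) (gabs _)
  have sp : ∫ p, g (W p.1 + p.2) * KK X Y p.1 p.2 ∂(μ.prod nu) =
      ∫ p, g (W p.1 + p.2) * DD μ X Y p ∂(μ.prod nu) +
      ∫ p, g (W p.1 + p.2) * mK μ X Y p.2 ∂(μ.prod nu) := by
    rw [← integral_add iP1 iP2]
    congr 1; ext p; unfold DD; ring
  have l1 : -(1/8 * (b + γ - (a - γ)) + 2 * R5 μ X Y) ≤
      ∫ p, g (W p.1 + p.2) * DD μ X Y p ∂(μ.prod nu) := by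
    have q1 : ∫ p, g (W p.1 + p.2) ^ 2 ∂(μ.prod nu) ≤ b + γ - (a - γ) := by
      rw [integral_prod _ iP3]
      calc _ ≤ ∫ ω, (b + γ - (a - γ)) ∂μ :=
            integral_mono iP3.integral_prod_left (integrable_const _) fun ω => trap_sq hg g0 g1 hcd gz (W ω)
        _ = _ := by simp
    have q2 : ∫ p, (-(1/8 * g (W p.1 + p.2) ^ 2 + 2 * DD μ X Y p ^ 2)) ∂(μ.prod nu) ≤
        ∫ p, g (W p.1 + p.2) * DD μ X Y p ∂(μ.prod nu) := by
      refine integral_mono ((iP3.const_mul _).add (H.iDD2.const_mul 2)).neg iP1 fun p => ?_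
      dsimp only
      nlinarith [sq_nonneg (g (W p.1 + p.2) + 4 * DD μ X Y p)]
    rw [integral_neg, integral_add (iP3.const_mul _) (H.iDD2.const_mul 2), integral_const_mul, integral_const_mul] at q2
    unfold R5
    linarith
  -- G
  set G : ℝ → ℝ := fun t => ∫ ω, g (W ω + t) ∂μ with hG
  have ihh : ∀ u t, Integrable (fun ω => hh γ u (W ω + t)) μ := fun u t =>
    H.bdd_int (hh_cont γ u).measurable (M := 1) (fun x => by
      rw [abs_of_nonneg (hh_nonneg _ _ _)]; exact hh_le _ _ _) t
  have Gd : ∀ t, |G t - G 0| ≤ |t| * S / γ := by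
    have aux : ∀ s t, s ≤ t → |G s - G t| ≤ (t - s) * S / γ := by
      intro s t hst
      have e : G s - G t = ∫ ω, (hh γ b (W ω + s) - hh γ b (W ω + t)) ∂μ -
          ∫ ω, (hh γ (a - γ) (W ω + s) - hh γ (a - γ) (W ω + t)) ∂μ := by
        simp only [hG, hgdef]
        rw [integral_sub (ihh _ _) (ihh _ _), integral_sub (ihh _ _) (ihh _ _),
          integral_sub (ihh _ _) (ihh _ _), integral_sub (ihh _ _) (ihh _ _)]
        ring
      have x1 := H.hh_exp hγ hS b hst
      have x2 := H.hh_exp hγ hS (a - γ) hst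
      have x3 : 0 ≤ ∫ ω, (hh γ b (W ω + s) - hh γ b (W ω + t)) ∂μ := integral_nonneg fun ω =>
        sub_nonneg.2 (hh_anti hγ b (by linarith))
      have x4 : 0 ≤ ∫ ω, (hh γ (a - γ) (W ω + s) - hh γ (a - γ) (W ω + t)) ∂μ := integral_nonneg fun ω =>
        sub_nonneg.2 (hh_anti hγ (a - γ) (by linarith))
      rw [e, abs_le]; constructor <;> linarith
    intro t
    rcases le_total 0 t with ht | ht
    · rw [abs_sub_comm, abs_of_nonneg ht]; simpa using aux 0 t ht
    · rw [abs_of_nonpos ht]; simpa using aux t 0 ht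
  have G01 : 0 ≤ G 0 ∧ G 0 ≤ 1 := by
    refine ⟨integral_nonneg fun ω => g0 _, ?_⟩
    calc G 0 ≤ ∫ ω, (1 : ℝ) ∂μ := integral_mono (H.bdd_int mg gabs 0) (integrable_const _) fun ω => g1 _
      _ = 1 := by simp
  have l2 : G 0 - R2 μ X Y - R3 μ X Y * S / γ ≤ ∫ p, g (W p.1 + p.2) * mK μ X Y p.2 ∂(μ.prod nu) := by
    have itm : Integrable (fun t => |t| * |mK μ X Y t|) nu := by
      refine H.imK.abs.mono' (Measurable.aestronglyMeasurable (by fun_prop)) ?_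
      unfold nu
      filter_upwards [ae_restrict_mem measurableSet_Icc] with t ht
      rw [Real.norm_eq_abs, abs_of_nonneg (by positivity)]
      exact mul_le_of_le_one_left (abs_nonneg _) (abs_le.2 ht)
    rw [integral_prod_symm _ iP2]
    have q : ∫ t, (G 0 * mK μ X Y t - S / γ * (|t| * |mK μ X Y t|)) ∂nu ≤
        ∫ t, ∫ ω, g (W ω + t) * mK μ X Y t ∂μ ∂nu := by
      refine integral_mono ((H.imK.const_mul _).sub (itm.const_mul _)) iP2.integral_prod_right fun t => ?_
      dsimp only
      rw [integral_mul_const]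
      have h1 : |(G t - G 0) * mK μ X Y t| ≤ |t| * S / γ * |mK μ X Y t| := by
        rw [abs_mul]; exact mul_le_mul_of_nonneg_right (Gd t) (abs_nonneg _)
      have h2 := (abs_le.1 h1).1
      have h3 : S / γ * (|t| * |mK μ X Y t|) = |t| * S / γ * |mK μ X Y t| := by ring
      change _ ≤ G t * mK μ X Y t
      rw [h3]; linarith
    rw [integral_sub (H.imK.const_mul _) (itm.const_mul _), integral_const_mul, integral_const_mul] at q
    have t2 := abs_le.1 H.tail2
    have t3 := H.tmK
    have hSγ : 0 ≤ S / γ := by positivity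
    have t4 := mul_le_mul_of_nonneg_left t3 hSγ
    have t5 : R3 μ X Y * S / γ = S / γ * R3 μ X Y := by ring
    have t6 : G 0 - R2 μ X Y ≤ G 0 * ∫ t, mK μ X Y t ∂nu := by
      have : G 0 * (1 - ∫ t, mK μ X Y t ∂nu) ≤ R2 μ X Y := by
        calc _ ≤ G 0 * R2 μ X Y := mul_le_mul_of_nonneg_left t2.2 G01.1
          _ ≤ _ := mul_le_of_le_one_left ((abs_nonneg _).trans H.tail2) G01.2
      linarith
    rw [t5]; linarith
  have l3 : μ.real {ω | a ≤ W ω ∧ W ω ≤ b} ≤ G 0 := by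
    have ms : MeasurableSet {ω | a ≤ W ω ∧ W ω ≤ b} :=
      (measurableSet_le measurable_const mW).inter (measurableSet_le mW measurable_const)
    rw [← integral_indicator_one ms]
    refine integral_mono ((integrable_const (1:ℝ)).indicator ms) (H.bdd_int mg gabs 0) fun ω => ?_
    dsimp only
    by_cases hω : ω ∈ {ω | a ≤ W ω ∧ W ω ≤ b}
    · rw [Set.indicator_of_mem hω, add_zero, gone _ hω.1 hω.2]; simp
    · rw [Set.indicator_of_notMem hω]; exact g0 _
  have hst' := (abs_le.1 hst).1
  rw [one_mul] at hst'
  rw [sp] at hst'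
  rw [hBd] at u1
  linarith

lemma conc_final (H : Setup μ X Y W) (α : ℝ) (hα : 0 ≤ α) (x : ℝ) : μ.real {ω | x ≤ W ω ∧ W ω ≤ x + α} ≤
    0.625 * α + 6.25 * R3 μ X Y + 4 * R2 μ X Y + 4 * R5 μ X Y := by
  have h3 := H.R3_pos
  set γ := 2 * R3 μ X Y with hγ
  have hγ0 : 0 < γ := by positivity
  set S := ⨆ x, μ.real {ω | x ≤ W ω ∧ W ω ≤ x + γ} with hSdef
  have bdd : BddAbove (Set.range fun x => μ.real {ω | x ≤ W ω ∧ W ω ≤ x + γ}) :=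
    ⟨1, by rintro _ ⟨x, rfl⟩; exact measureReal_le_one⟩
  have hS : ∀ x, μ.real {ω | x ≤ W ω ∧ W ω ≤ x + γ} ≤ S := fun x => le_ciSup bdd x
  have hh2 : R3 μ X Y * S / γ = S / 2 := by rw [hγ]; field_simp
  have hS2 : S ≤ 0.625 * γ + 1.25 * γ + 2 * R2 μ X Y + 2 * R5 μ X Y + S / 2 := by
    refine ciSup_le fun x => ?_
    have := H.conc hγ0 hS x (x + γ) (by linarith)
    rw [hh2] at this
    simpa using this
  have := H.conc hγ0 hS x (x + α) (by linarith)
  rw [hh2] at this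
  have e : x + α - x = α := by ring
  rw [e] at this
  linarith

end Setup
end LDBE

namespace LDBE
variable {Ω : Type*} [MeasurableSpace Ω] {μ : Measure Ω} [IsProbabilityMeasure μ]
    {ι : Type*} [Fintype ι] {X Y : ι → Ω → ℝ} {W : Ω → ℝ}

noncomputable def R1 (μ : Measure Ω) (X Y : ι → Ω → ℝ) : ℝ := ∫ ω, |∑ i, X i ω * Y i ω - 1| ∂μ
noncomputable def R4 (μ : Measure Ω) (X Y : ι → Ω → ℝ) (W : Ω → ℝ) : ℝ :=
  ∑ i, ∫ ω, |W ω * X i ω| * min ((Y i ω) ^ 2) 1 ∂μ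
noncomputable def R6 (μ : Measure Ω) (X Y : ι → Ω → ℝ) : ℝ :=
  ∫ p, |p.2| * DD μ X Y p ^ 2 ∂(μ.prod nu)

lemma hh_D_le (α u x y : ℝ) : |hh α u x - hh α u y| ≤ 1 := by
  have := hh_nonneg α u x
  have := hh_nonneg α u y
  have := hh_le α u x
  have := hh_le α u y
  rw [abs_le]; constructor <;> linarith

namespace Setup

lemma itm (H : Setup μ X Y W) : Integrable (fun t => |t| * |mK μ X Y t|) nu := by
  have mmK := H.mmK
  refine H.imK.abs.mono' (Measurable.aestronglyMeasurable (by fun_prop)) ?_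
  unfold nu
  filter_upwards [ae_restrict_mem measurableSet_Icc] with t ht
  rw [Real.norm_eq_abs, abs_of_nonneg (by positivity)]
  exact mul_le_of_le_one_left (abs_nonneg _) (abs_le.2 ht)

lemma mDel (H : Setup μ X Y W) (α u : ℝ) : Measurable (fun p : Ω × ℝ => hh α u (W p.1) - hh α u (W p.1 + p.2)) := by
  have mW := H.mW
  have mh := (hh_cont α u).measurable
  fun_prop

lemma delta1 (H : Setup μ X Y W) {α β : ℝ} (hα : 0 < α) (hβ : ∀ x, μ.real {ω | x ≤ W ω ∧ W ω ≤ x + α} ≤ β) (u : ℝ) :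
    Integrable (fun p : Ω × ℝ => (hh α u (W p.1) - hh α u (W p.1 + p.2)) * mK μ X Y p.2) (μ.prod nu) ∧
    |∫ p, (hh α u (W p.1) - hh α u (W p.1 + p.2)) * mK μ X Y p.2 ∂(μ.prod nu)| ≤ β / α * R3 μ X Y := by
  have mD := H.mDel α u
  have mmK := H.mmK
  have hβ0 : 0 ≤ β := measureReal_nonneg.trans (hβ 0)
  have iI : Integrable (fun p : Ω × ℝ => (hh α u (W p.1) - hh α u (W p.1 + p.2)) * mK μ X Y p.2) (μ.prod nu) := by
    refine int_prod' (by fun_prop) (∫ ω, ∑ i, |X i ω| ∂μ) fun ω t _ => ?_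
    rw [abs_mul]
    exact (mul_le_of_le_one_left (abs_nonneg _) (hh_D_le _ _ _ _)).trans (H.mK_le t)
  refine ⟨iI, ?_⟩
  refine abs_integral_le_integral_abs.trans ?_
  rw [integral_prod_symm _ iI.abs]
  calc _ ≤ ∫ t, β / α * (|t| * |mK μ X Y t|) ∂nu := by
        refine integral_mono iI.abs.integral_prod_right (H.itm.const_mul _) fun t => ?_
        simp only [abs_mul]
        rw [integral_mul_const]
        refine (mul_le_mul_of_nonneg_right (H.hh_abs hα hβ u t) (abs_nonneg _)).trans (le_of_eq ?_)
        ring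
    _ ≤ _ := by
        rw [integral_const_mul]
        exact mul_le_mul_of_nonneg_left H.tmK (by positivity)

lemma delta2 (H : Setup μ X Y W) {α β : ℝ} (hα : 0 < α) (hβ : ∀ x, μ.real {ω | x ≤ W ω ∧ W ω ≤ x + α} ≤ β) (u : ℝ)
    {c : ℝ} (hc : 0 < c) :
    Integrable (fun p : Ω × ℝ => (hh α u (W p.1) - hh α u (W p.1 + p.2)) * DD μ X Y p) (μ.prod nu) ∧
    |∫ p, (hh α u (W p.1) - hh α u (W p.1 + p.2)) * DD μ X Y p ∂(μ.prod nu)| ≤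
      c * (β / α) + R6 μ X Y / (2 * c) := by
  have mD := H.mDel α u
  have mDD := H.mDD
  have hβ0 : 0 ≤ β := measureReal_nonneg.trans (hβ 0)
  have iI : Integrable (fun p : Ω × ℝ => (hh α u (W p.1) - hh α u (W p.1 + p.2)) * DD μ X Y p) (μ.prod nu) := by
    refine H.iDD.abs.mono' (Measurable.aestronglyMeasurable (by fun_prop)) (Filter.Eventually.of_forall fun p => ?_)
    rw [Real.norm_eq_abs, abs_mul]
    exact mul_le_of_le_one_left (abs_nonneg _) (hh_D_le _ _ _ _)
  have iQ : Integrable (fun p : Ω × ℝ => (hh α u (W p.1) - hh α u (W p.1 + p.2)) ^ 2 / |p.2|) (μ.prod nu) := by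
    refine int_prod' (by fun_prop) (1 / α) fun ω t _ => ?_
    dsimp only
    rw [abs_of_nonneg (by positivity)]
    rcases eq_or_ne t 0 with rfl | ht
    · simp; positivity
    · have ht' : 0 < |t| := abs_pos.2 ht
      rw [div_le_iff₀ ht']
      have h1 := hh_lip hα u (W ω) (W ω + t)
      have h2 := hh_D_le α u (W ω) (W ω + t)
      have e : |W ω - (W ω + t)| = |t| := by
        rw [sub_add_cancel_left, abs_neg]
      rw [e] at h1
      rw [← sq_abs, sq]
      calc _ ≤ 1 * (|t| / α) := mul_le_mul h2 h1 (abs_nonneg _) zero_le_one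
        _ = _ := by ring
  have bQ : ∫ p, (hh α u (W p.1) - hh α u (W p.1 + p.2)) ^ 2 / |p.2| ∂(μ.prod nu) ≤ 2 * (β / α) := by
    rw [integral_prod_symm _ iQ]
    calc _ ≤ ∫ t, β / α ∂nu := by
          refine integral_mono iQ.integral_prod_right (integrable_const _) fun t => ?_
          dsimp only
          rw [integral_div]
          rcases eq_or_ne t 0 with rfl | ht
          · simp; positivity
          · have ht' : 0 < |t| := abs_pos.2 ht
            rw [div_le_iff₀ ht']
            have mDt : Measurable (fun ω => hh α u (W ω) - hh α u (W ω + t)) :=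
              mD.comp (measurable_id.prodMk measurable_const)
            have i1 : Integrable (fun ω => |hh α u (W ω) - hh α u (W ω + t)|) μ := by
              refine (integrable_const (1:ℝ)).mono' mDt.abs.aestronglyMeasurable (Filter.Eventually.of_forall fun ω => ?_)
              rw [Real.norm_eq_abs, abs_abs]; exact hh_D_le _ _ _ _
            refine (integral_mono_of_nonneg (Filter.Eventually.of_forall fun ω => sq_nonneg _) i1
              (Filter.Eventually.of_forall fun ω => ?_)).trans ((H.hh_abs hα hβ u t).trans (le_of_eq (by ring)))
            dsimp only
            rw [← sq_abs, sq]
            exact mul_le_of_le_one_left (abs_nonneg _) (hh_D_le _ _ _ _)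
      _ = _ := by
          rw [integral_const, nu, measureReal_restrict_apply_univ, Real.volume_real_Icc_of_le (by norm_num)]
          norm_num
  refine ⟨iI, abs_integral_le_integral_abs.trans ?_⟩
  calc _ ≤ ∫ p, (c / 2 * ((hh α u (W p.1) - hh α u (W p.1 + p.2)) ^ 2 / |p.2|) +
        1 / (2 * c) * (|p.2| * DD μ X Y p ^ 2)) ∂(μ.prod nu) := by
        refine integral_mono iI.abs ((iQ.const_mul _).add (H.itDD2.const_mul _)) fun p => ?_
        dsimp only
        rcases eq_or_ne p.2 0 with ht | ht
        · simp [ht]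
        · have ht' : 0 < |p.2| := abs_pos.2 ht
          rw [abs_mul, ← sq_abs (hh α u (W p.1) - hh α u (W p.1 + p.2)), ← sq_abs (DD μ X Y p)]
          generalize |hh α u (W p.1) - hh α u (W p.1 + p.2)| = a
          generalize |DD μ X Y p| = d
          generalize |p.2| = s at ht'
          have : c / 2 * (a ^ 2 / s) + 1 / (2 * c) * (s * d ^ 2) - a * d = (c * a - s * d) ^ 2 / (2 * c * s) := by
            field_simp; ring
          have : 0 ≤ (c * a - s * d) ^ 2 / (2 * c * s) := by positivity
          linarith
    _ ≤ _ := by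
        rw [integral_add (iQ.const_mul _) (H.itDD2.const_mul _), integral_const_mul, integral_const_mul]
        have := mul_le_mul_of_nonneg_left bQ (by positivity : 0 ≤ c / 2)
        have e : R6 μ X Y / (2 * c) = 1 / (2 * c) * R6 μ X Y := by ring
        rw [e]
        unfold R6
        linarith

lemma gw (H : Setup μ X Y W) {g : ℝ → ℝ} (hg : Continuous g) (g1 : ∀ x, |g x| ≤ 1) :
    |∫ ω, g (W ω) ∂μ - ∫ p, g (W p.1) * KK X Y p.1 p.2 ∂(μ.prod nu)| ≤ R1 μ X Y + R2 μ X Y := by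
  have mW := H.mW
  have mg := hg.measurable
  have mKK := H.mKK
  have iP : Integrable (fun p : Ω × ℝ => g (W p.1) * KK X Y p.1 p.2) (μ.prod nu) := by
    refine H.iKK.abs.mono' (Measurable.aestronglyMeasurable (by fun_prop)) (Filter.Eventually.of_forall fun p => ?_)
    rw [Real.norm_eq_abs, abs_mul]
    exact mul_le_of_le_one_left (abs_nonneg _) (g1 _)
  have ig : Integrable (fun ω => g (W ω)) μ := by simpa using H.bdd_int mg g1 0
  have i1 : Integrable (fun ω => |∑ i, X i ω * Y i ω - 1|) μ :=
    ((integrable_finsetSum _ fun i _ => H.iXY i).sub (integrable_const 1)).abs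
  have i2 : Integrable (fun ω => ∑ i, (if 1 < |Y i ω| then |X i ω * Y i ω| else 0)) μ :=
    integrable_finsetSum _ fun i _ => H.i2 i
  rw [integral_prod _ iP, ← integral_sub ig iP.integral_prod_left, R1, R2, ← integral_finsetSum _ fun i _ => H.i2 i,
    ← integral_add i1 i2]
  refine abs_integral_le_integral_abs.trans (integral_mono (ig.sub iP.integral_prod_left).abs (i1.add i2) fun ω => ?_)
  dsimp only [Pi.sub_apply]
  rw [integral_const_mul]
  have t1 := abs_le.1 (H.tail1 ω)
  have e : g (W ω) - g (W ω) * ∫ t, KK X Y ω t ∂nu = g (W ω) * (1 - ∫ t, KK X Y ω t ∂nu) := by ring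
  rw [e, abs_mul]
  refine (mul_le_of_le_one_left (abs_nonneg _) (g1 _)).trans ?_
  have t2 := neg_abs_le (∑ i, X i ω * Y i ω - 1)
  have t3 := le_abs_self (∑ i, X i ω * Y i ω - 1)
  rw [abs_le]; constructor <;> linarith

lemma gt (H : Setup μ X Y W) {f : ℝ → ℝ} (mf : Measurable f) (hf : ∀ w t : ℝ, |t| ≤ 1 → |w * f w - (w + t) * f (w + t)| ≤ |t| * (|w| + 4)) :
    Integrable (fun p : Ω × ℝ => (W p.1 * f (W p.1) - (W p.1 + p.2) * f (W p.1 + p.2)) * KK X Y p.1 p.2) (μ.prod nu) ∧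
    |∫ p, (W p.1 * f (W p.1) - (W p.1 + p.2) * f (W p.1 + p.2)) * KK X Y p.1 p.2 ∂(μ.prod nu)| ≤
      R4 μ X Y W + 4 * R3 μ X Y := by
  have mW := H.mW
  have mKK := H.mKK
  have iWX : ∀ i, Integrable (fun ω => |W ω| * |X i ω|) μ := fun i => by
    have := (H.iXW i).abs
    simpa only [abs_mul, mul_comm] using this
  have iB : ∀ i, Integrable (fun ω => (|W ω| + 4) * |X i ω|) μ := fun i => by
    simp only [add_mul]
    exact (iWX i).add ((H.iX i).abs.const_mul 4)
  obtain ⟨k1, k2⟩ := H.tK (B := fun ω => |W ω| + 4) (by fun_prop) (fun ω => by positivity) iB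
  have hle : ∀ᵐ p ∂(μ.prod nu), |(W p.1 * f (W p.1) - (W p.1 + p.2) * f (W p.1 + p.2)) * KK X Y p.1 p.2| ≤
      |p.2| * (|W p.1| + 4) * |KK X Y p.1 p.2| := by
    filter_upwards [ae_snd] with p hp
    rw [abs_mul]
    exact mul_le_mul_of_nonneg_right (hf _ _ hp) (abs_nonneg _)
  have iI : Integrable (fun p : Ω × ℝ => (W p.1 * f (W p.1) - (W p.1 + p.2) * f (W p.1 + p.2)) * KK X Y p.1 p.2) (μ.prod nu) :=
    k1.mono' (Measurable.aestronglyMeasurable (by fun_prop)) hle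
  refine ⟨iI, abs_integral_le_integral_abs.trans ((integral_mono_ae iI.abs k1 hle).trans (k2.trans (le_of_eq ?_)))⟩
  rw [R4, R3, Finset.mul_sum, ← Finset.sum_add_distrib]
  refine Finset.sum_congr rfl fun i _ => ?_
  have j1 := H.iB (B := fun ω => |W ω|) mW.abs i (iWX i)
  have j2 := H.iB (B := fun ω => 1) measurable_const i (by simpa using (H.iX i).abs)
  simp only [one_mul] at j2
  simp only [abs_mul]
  rw [← integral_const_mul, ← integral_add j1 (j2.const_mul 4)]
  congr 1; ext ω; ring

lemma main (H : Setup μ X Y W) {α β : ℝ} (hα : 0 < α) (hβ : ∀ x, μ.real {ω | x ≤ W ω ∧ W ω ≤ x + α} ≤ β) (u : ℝ)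
    {c : ℝ} (hc : 0 < c) :
    |∫ ω, hh α u (W ω) ∂μ - (∫ x, hh α u x * ga x) / √(2 * π)| ≤
      R1 μ X Y + 2 * R2 μ X Y + (4 + β / α) * R3 μ X Y + R4 μ X Y W + c * (β / α) + R6 μ X Y / (2 * c) := by
  obtain ⟨f, N, hN, hN0, hN1, hd, hb⟩ := stein_exists (hh_cont α u) (hh_nonneg α u) (hh_le α u)
  have fb := stein_bound (hh_nonneg α u) (hh_le α u) hN0 hN1 hd hb
  have fg := stein_g (hh_nonneg α u) (hh_le α u) hN0 hN1 hd hb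
  rw [← hN]
  have hfc : Continuous f := continuous_iff_continuousAt.2 fun x => (hd x).continuousAt
  have hhc := hh_cont α u
  obtain ⟨g, hg⟩ : ∃ g : ℝ → ℝ, ∀ w, g w = w * f w + (hh α u w - N) := ⟨_, fun _ => rfl⟩
  simp only [← hg] at hd hb
  have gc : Continuous g := by
    rw [show g = fun w => w * f w + (hh α u w - N) from funext hg]
    fun_prop
  have mf := hfc.measurable
  have mg := gc.measurable
  have mW := H.mW
  have mKK := H.mKK
  have s1 := H.stein1 hd gc hb fb
  have s2 := H.gw gc hb
  obtain ⟨i3, s3⟩ := H.gt mf fg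
  obtain ⟨i4, s4⟩ := H.delta1 hα hβ u
  obtain ⟨i5, s5⟩ := H.delta2 hα hβ u hc
  have ig : Integrable (fun ω => g (W ω)) μ := by simpa using H.bdd_int mg hb 0
  have ih : Integrable (fun ω => hh α u (W ω)) μ := by
    simpa using H.bdd_int hhc.measurable (M := 1) (fun x => by
      rw [abs_of_nonneg (hh_nonneg _ _ _)]; exact hh_le _ _ _) 0
  have iw : Integrable (fun ω => W ω * f (W ω)) μ := by
    have := (ig.sub ih).add (integrable_const N)
    refine this.congr (Filter.Eventually.of_forall fun ω => ?_)
    simp only [Pi.add_apply, Pi.sub_apply, hg]; ring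
  have e1 : ∫ ω, hh α u (W ω) ∂μ - N = ∫ ω, g (W ω) ∂μ - ∫ ω, W ω * f (W ω) ∂μ := by
    have : ∫ ω, g (W ω) ∂μ = ∫ ω, W ω * f (W ω) ∂μ + (∫ ω, hh α u (W ω) ∂μ - N) := by
      simp only [hg]
      have ih' : Integrable (fun ω => hh α u (W ω) - N) μ := ih.sub (integrable_const N)
      rw [integral_add iw ih', integral_sub ih (integrable_const N)]
      simp
    rw [this]; ring
  have ia : Integrable (fun p : Ω × ℝ => g (W p.1) * KK X Y p.1 p.2) (μ.prod nu) := by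
    refine H.iKK.abs.mono' (Measurable.aestronglyMeasurable (by fun_prop)) (Filter.Eventually.of_forall fun p => ?_)
    rw [Real.norm_eq_abs, abs_mul]
    exact mul_le_of_le_one_left (abs_nonneg _) (hb _)
  have ib : Integrable (fun p : Ω × ℝ => g (W p.1 + p.2) * KK X Y p.1 p.2) (μ.prod nu) := by
    refine H.iKK.abs.mono' (Measurable.aestronglyMeasurable (by fun_prop)) (Filter.Eventually.of_forall fun p => ?_)
    rw [Real.norm_eq_abs, abs_mul]
    exact mul_le_of_le_one_left (abs_nonneg _) (hb _)
  have e2 : ∫ p, g (W p.1) * KK X Y p.1 p.2 ∂(μ.prod nu) - ∫ p, g (W p.1 + p.2) * KK X Y p.1 p.2 ∂(μ.prod nu) =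
      ∫ p, (W p.1 * f (W p.1) - (W p.1 + p.2) * f (W p.1 + p.2)) * KK X Y p.1 p.2 ∂(μ.prod nu) +
      ∫ p, (hh α u (W p.1) - hh α u (W p.1 + p.2)) * mK μ X Y p.2 ∂(μ.prod nu) +
      ∫ p, (hh α u (W p.1) - hh α u (W p.1 + p.2)) * DD μ X Y p ∂(μ.prod nu) := by
    have i34 : Integrable (fun p : Ω × ℝ => (W p.1 * f (W p.1) - (W p.1 + p.2) * f (W p.1 + p.2)) * KK X Y p.1 p.2 +
        (hh α u (W p.1) - hh α u (W p.1 + p.2)) * mK μ X Y p.2) (μ.prod nu) := i3.add i4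
    rw [← integral_sub ia ib, ← integral_add i3 i4, ← integral_add i34 i5]
    congr 1; ext p
    simp only [Pi.add_apply, hg, DD]; ring
  rw [e1]
  have s1 := abs_le.1 s1
  have s2 := abs_le.1 s2
  have s3 := abs_le.1 s3
  have s4 := abs_le.1 s4
  have s5 := abs_le.1 s5
  rw [abs_le]; constructor <;> linarith

lemma R6_nonneg (H : Setup μ X Y W) : 0 ≤ R6 μ X Y := integral_nonneg fun p => by positivity

lemma final (H : Setup μ X Y W) (z : ℝ) : |μ.real {ω | W ω ≤ z} - (∫ x in Set.Iic z, ga x) / √(2 * π)| ≤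
    R1 μ X Y + 4 * R2 μ X Y + 8 * R3 μ X Y + R4 μ X Y W + 4.5 * R5 μ X Y + 1.5 * √(R6 μ X Y) := by
  have h3 := H.R3_pos
  have h2 : 0 ≤ R2 μ X Y := (abs_nonneg _).trans H.tail2
  have h5 : 0 ≤ R5 μ X Y := integral_nonneg fun p => by positivity
  have h6 := H.R6_nonneg
  have hs6 := Real.sqrt_nonneg (R6 μ X Y)
  have hsq := Real.sq_sqrt h6
  generalize √(R6 μ X Y) = r6 at hs6 hsq
  obtain ⟨α, hα⟩ : ∃ α, α = 12.5 * R3 μ X Y + 8 * R2 μ X Y + 8 * R5 μ X Y := ⟨_, rfl⟩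
  have hα0 : 0 < α := by rw [hα]; positivity
  have hβ : ∀ x, μ.real {ω | x ≤ W ω ∧ W ω ≤ x + α} ≤ 1.125 * α := fun x => by
    have := H.conc_final α hα0.le x
    linarith
  obtain ⟨c, hc⟩ : ∃ c, c = 2 / 3 * r6 + R3 μ X Y / 4 := ⟨_, rfl⟩
  have hc0 : 0 < c := by rw [hc]; positivity
  have hq : 1.125 * α / α = 1.125 := by field_simp
  have m6 : R6 μ X Y / (2 * c) ≤ 0.75 * r6 := by
    rw [div_le_iff₀ (by positivity), ← hsq, hc]
    nlinarith [mul_nonneg hs6 h3.le]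
  have mm : ∀ u, |∫ ω, hh α u (W ω) ∂μ - (∫ x, hh α u x * ga x) / √(2 * π)| ≤
      R1 μ X Y + 2 * R2 μ X Y + 5.40625 * R3 μ X Y + R4 μ X Y W + 1.5 * r6 := fun u => by
    have := H.main hα0 hβ u hc0
    rw [hq] at this
    refine this.trans ?_
    rw [hc] at m6 ⊢
    linarith
  have hp : 2.5 ≤ √(2 * π) := by
    apply Real.le_sqrt_of_sq_le
    have := Real.pi_gt_d2
    norm_num at this ⊢
    linarith
  have hp0 : 0 < √(2 * π) := by linarith
  have hsm : α / 2 / √(2 * π) ≤ 0.2 * α := by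
    rw [div_le_iff₀ hp0]; nlinarith
  have ms : MeasurableSet {ω | W ω ≤ z} := measurableSet_le H.mW measurable_const
  have ih : ∀ u, Integrable (fun ω => hh α u (W ω)) μ := fun u => by
    simpa using H.bdd_int (hh_cont α u).measurable (M := 1) (fun x => by
      rw [abs_of_nonneg (hh_nonneg _ _ _)]; exact hh_le _ _ _) 0
  have up : μ.real {ω | W ω ≤ z} ≤ ∫ ω, hh α z (W ω) ∂μ := by
    rw [← integral_indicator_one ms]
    refine integral_mono ((integrable_const (1:ℝ)).indicator ms) (ih z) fun ω => ?_
    dsimp only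
    by_cases hω : ω ∈ {ω | W ω ≤ z}
    · rw [Set.indicator_of_mem hω, hh_one hα0 hω]; simp
    · rw [Set.indicator_of_notMem hω]; exact hh_nonneg _ _ _
  have lo : ∫ ω, hh α (z - α) (W ω) ∂μ ≤ μ.real {ω | W ω ≤ z} := by
    rw [← integral_indicator_one ms]
    refine integral_mono (ih _) ((integrable_const (1:ℝ)).indicator ms) fun ω => ?_
    dsimp only
    by_cases hω : ω ∈ {ω | W ω ≤ z}
    · rw [Set.indicator_of_mem hω]; exact hh_le _ _ _
    · rw [Set.indicator_of_notMem hω, hh_zero hα0]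
      simp only [Set.mem_ofPred_eq, not_le] at hω
      linarith
  have g1 := (hh_gauss hα0 z).2.1
  have g2 := (hh_gauss hα0 (z - α)).2.2
  rw [sub_add_cancel] at g2
  have g1' := div_le_div_of_nonneg_right g1 hp0.le
  have g2' := div_le_div_of_nonneg_right g2 hp0.le
  rw [add_div] at g1' g2'
  have m1 := abs_le.1 (mm z)
  have m2 := abs_le.1 (mm (z - α))
  rw [abs_le]; constructor <;> linarith

end Setup
end LDBE

theorem stmt_0
    {Ω : Type*} [MeasurableSpace Ω] {μ : Measure Ω} [IsProbabilityMeasure μ]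
    {ι : Type*} [Fintype ι] [DecidableEq ι]
    (X : ι → Ω → ℝ) (A : ι → Finset ι)
    (hXmeas : ∀ i, Measurable (X i))
    (hXmean : ∀ i, ∫ ω, X i ω ∂μ = 0)
    (hXsq : ∀ i, Integrable (fun ω => (X i ω) ^ 2) μ)
    (hiA : ∀ i, i ∈ A i)
    (hLD1 : ∀ i, IndepFun (X i) (fun ω => fun j : ((A i)ᶜ : Finset ι) => X j.1 ω) μ)
    (W : Ω → ℝ) (hW : ∀ ω, W ω = ∑ i, X i ω)
    (hWvar : ∫ ω, (W ω) ^ 2 ∂μ = 1)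
    (Y : ι → Ω → ℝ) (hY : ∀ i ω, Y i ω = ∑ j ∈ A i, X j ω)
    (Khat : ℝ → Ω → ℝ)
    (hKhat : ∀ t ω, Khat t ω = ∑ i, X i ω *
      ((if -(Y i ω) ≤ t ∧ t < 0 then (1 : ℝ) else 0)
        - (if 0 ≤ t ∧ t ≤ -(Y i ω) then (1 : ℝ) else 0)))
    (r1 r2 r3 r4 r5 r6 : ℝ)
    (hr1 : r1 = ∫ ω, |∑ i, (X i ω * Y i ω - ∫ ω', X i ω' * Y i ω' ∂μ)| ∂μ)
    (hr2 : r2 = ∑ i, ∫ ω, (if 1 < |Y i ω| then |X i ω * Y i ω| else 0) ∂μ)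
    (hr3 : r3 = ∑ i, ∫ ω, |X i ω| * min ((Y i ω) ^ 2) 1 ∂μ)
    (hr4 : r4 = ∑ i, ∫ ω, |W ω * X i ω| * min ((Y i ω) ^ 2) 1 ∂μ)
    (hr5 : r5 = ∫ t in Set.Icc (-1 : ℝ) 1, variance (Khat t) μ)
    (hr6 : r6 = Real.sqrt (∫ t in Set.Icc (-1 : ℝ) 1, |t| * variance (Khat t) μ)) :
    ∀ z : ℝ, |(μ {ω | W ω ≤ z}).toReal - stdGaussianCDF z| ≤
      r1 + 4 * r2 + 8 * r3 + r4 + 4.5 * r5 + 1.5 * r6 := by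
  have hYf : ∀ i, Y i = fun ω => ∑ j ∈ A i, X j ω := fun i => funext (hY i)
  have hWf : W = fun ω => ∑ j, X j ω := funext hW
  have X2 : ∀ i, MemLp (X i) 2 μ := fun i =>
    (memLp_two_iff_integrable_sq (hXmeas i).aestronglyMeasurable).2 (hXsq i)
  have H : LDBE.Setup μ X Y W := by
    refine ⟨hXmeas, fun i => ?_, ?_, X2, fun i => ?_, ?_, hW, hWvar, hXmean, fun i => ?_⟩
    · rw [hYf]; exact Finset.measurable_fun_sum _ fun j _ => hXmeas j
    · rw [hWf]; exact Finset.measurable_fun_sum _ fun j _ => hXmeas j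
    · rw [hYf]; exact memLp_finsetSum _ fun j _ => X2 j
    · rw [hWf]; exact memLp_finsetSum _ fun j _ => X2 j
    · have e : (fun ω => W ω - Y i ω) =
          (fun v : ((A i)ᶜ : Finset ι) → ℝ => ∑ j, v j) ∘ (fun ω => fun j : ((A i)ᶜ : Finset ι) => X j.1 ω) := by
        ext ω
        simp only [Function.comp]
        rw [hW, hY, Finset.sum_coe_sort ((A i)ᶜ) (fun j => X j ω), ← Finset.sum_add_sum_compl (A i)]
        ring
      rw [e]
      exact (hLD1 i).comp measurable_id (Finset.measurable_fun_sum _ fun j _ => measurable_pi_apply j)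
  have hK : ∀ t, Khat t = fun ω => LDBE.KK X Y ω t := by
    intro t; ext ω
    rw [hKhat]; unfold LDBE.KK LDBE.kk
    rfl
  have e1 : r1 = LDBE.R1 μ X Y := by
    rw [hr1, LDBE.R1]
    simp only [Finset.sum_sub_distrib, H.sumEXY]
  have e5 : r5 = LDBE.R5 μ X Y := by
    rw [hr5, LDBE.R5, ← H.r5_eq]
    simp only [hK]; rfl
  have e6 : r6 = √(LDBE.R6 μ X Y) := by
    rw [hr6, LDBE.R6, ← H.r6_eq]
    simp only [hK]; rfl
  intro z
  have key := H.final z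
  have eg : stdGaussianCDF z = (∫ x in Set.Iic z, LDBE.ga x) / √(2 * π) := by
    unfold stdGaussianCDF LDBE.ga
    rw [integral_const_mul]
    rw [div_eq_inv_mul]
  rw [eg, e1, hr2, hr3, hr4, e5, e6]
  exact key
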